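/- arXiv:1702.01139 — 15 statements merged into one kernel-verified Lean document; each statement's English description precedes it below -/
import Mathlib

section
/- Suppose ω is an alternating bilinear form on V₂ that is multiplicative. Then for all a ∈ W₂ and y ∈ W₁ one has C₁₃(a,y) = C₃₂(y, ∂₂ a); explicitly, ω((a,0,0,0),(0,0,y,0)) = ω((0,0,y,0),(0,∂₂ a,0,0)). -/
/-- For a multiplicative alternating bilinear form `ω` on
`V₂ = W₂ × W₁ × W₁ × W₀`, one has `C₁₃(a,y) = C₃₂(y, ∂₂ a)`. -/
theorem stmt_0
    (W0 W1 W2 : Type*)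
    [AddCommGroup W0] [Module ℝ W0]
    [AddCommGroup W1] [Module ℝ W1]
    [AddCommGroup W2] [Module ℝ W2]
    (d2 : W2 →ₗ[ℝ] W1) (d1 : W1 →ₗ[ℝ] W0)
    (hd : ∀ a : W2, d1 (d2 a) = 0)
    (ω : (W2 × W1 × W1 × W0) →ₗ[ℝ] (W2 × W1 × W1 × W0) →ₗ[ℝ] ℝ)
    (halt : ∀ v, ω v v = 0)
    (hmult : ∀ (a b c : W2) (x y z : W1) (m : W0)
        (a' b' c' : W2) (x' y' z' : W1) (m' : W0),
      ω (a, x, y, m) (a', x', y', m')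
      - ω (b, x, z, m) (b', x', z', m')
      + ω (c, y, z, m) (c', y', z', m')
      - ω (c - b + a, d2 a + y - x, d2 b + z - x, m - d1 x)
          (c' - b' + a', d2 a' + y' - x', d2 b' + z' - x', m' - d1 x') = 0) :
    ∀ (a : W2) (y : W1),
      ω (a, 0, 0, 0) (0, 0, y, 0) = ω (0, 0, y, 0) (0, d2 a, 0, 0) := by
  intro a y
  -- On the pair `(a,0,0,0,0,0,0)`, `(0,0,0,0,0,y,0)` only the face `f₃` contributes.
  have h : ω (a, d2 a, 0, 0) (0, 0, y, 0) = 0 := by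
    have h3 := hmult a 0 0 0 0 0 0 0 0 0 0 0 y 0
    simp only [map_zero, add_zero, sub_zero, zero_add] at h3
    simpa [← Prod.zero_eq_mk] using h3
  have hsplit : ((a, d2 a, 0, 0) : W2 × W1 × W1 × W0) = (a, 0, 0, 0) + (0, d2 a, 0, 0) := by
    simp
  have hskew : -ω (0, d2 a, 0, 0) (0, 0, y, 0) = ω (0, 0, y, 0) (0, d2 a, 0, 0) :=
    LinearMap.IsAlt.neg halt _ _
  rw [hsplit, map_add, LinearMap.add_apply] at h
  linarith
end

section
/- Suppose ω is an alternating bilinear form on V₂ that is multiplicative. Then for all a ∈ W₂ and x ∈ W₁ one has C₁₂(a,x) = C₃₂(∂₂ a, x); explicitly, ω((a,0,0,0),(0,x,0,0)) = ω((0,0,∂₂ a,0),(0,x,0,0)). -/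
/-- For a multiplicative alternating bilinear form `ω` on
`V₂ = W₂ × W₁ × W₁ × W₀`, one has `C₁₂(a,x) = C₃₂(∂₂ a, x)`. -/
theorem stmt_1
    (W0 W1 W2 : Type*)
    [AddCommGroup W0] [Module ℝ W0]
    [AddCommGroup W1] [Module ℝ W1]
    [AddCommGroup W2] [Module ℝ W2]
    (d2 : W2 →ₗ[ℝ] W1) (d1 : W1 →ₗ[ℝ] W0)
    (hd : ∀ a : W2, d1 (d2 a) = 0)
    (ω : (W2 × W1 × W1 × W0) →ₗ[ℝ] (W2 × W1 × W1 × W0) →ₗ[ℝ] ℝ)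
    (halt : ∀ v, ω v v = 0)
    (hmult : ∀ (a b c : W2) (x y z : W1) (m : W0)
        (a' b' c' : W2) (x' y' z' : W1) (m' : W0),
      ω (a, x, y, m) (a', x', y', m')
      - ω (b, x, z, m) (b', x', z', m')
      + ω (c, y, z, m) (c', y', z', m')
      - ω (c - b + a, d2 a + y - x, d2 b + z - x, m - d1 x)
          (c' - b' + a', d2 a' + y' - x', d2 b' + z' - x', m' - d1 x') = 0) :
    ∀ (a : W2) (x : W1),
      ω (a, 0, 0, 0) (0, x, 0, 0) = ω (0, 0, d2 a, 0) (0, x, 0, 0) := by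
  intro a x
  -- Pair the `b`-direction with the `y`-direction of `V₃`: in each of `f₀`, `f₁`, `f₂` at least
  -- one of the two vectors dies, so `f₃` gives `ω (-a, 0, ∂₂ a, 0) (0, x, 0, 0) = 0`.
  have h := hmult 0 a 0 0 0 0 0 0 0 0 0 x 0 0
  have e : ((-a, 0, d2 a, 0) : W2 × W1 × W1 × W0) = (0, 0, d2 a, 0) - (a, 0, 0, 0) := by
    simp
  have z : ((0, 0, 0, 0) : W2 × W1 × W1 × W0) = 0 := rfl
  simp only [map_zero, sub_zero, add_zero, zero_add, zero_sub, z, e, LinearMap.zero_apply,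
    map_sub, LinearMap.sub_apply] at h
  linarith
end

section
/- Suppose ω is an alternating bilinear form on V₂ that is multiplicative. Then for all a, a' ∈ W₂ one has C₁₁(a,a') = −C₃₂(∂₂ a, ∂₂ a'); explicitly, ω((a,0,0,0),(a',0,0,0)) = −ω((0,0,∂₂ a,0),(0,∂₂ a',0,0)). -/
/-!
Write `C_ij` for the components of `ω`. Each generator of `V₃` lives in one slot, and only its
last face mixes slots: `a ↦ (a, ∂₂ a, 0, 0)`, `b ↦ (-b, 0, ∂₂ b, 0)`, `c ↦ (c, 0, 0, 0)`. Testing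
multiplicativity on three pairs of generators gives
* `(a, c)`: `C₁₁(a, c) + C₂₁(∂₂ a, c) = 0`,
* `(b, c)`: `C₁₁(b, c) = C₃₁(∂₂ b, c)`,
* `(a, b)`: `-C₁₁(a, b) + C₁₃(a, ∂₂ b) - C₂₁(∂₂ a, b) + C₂₃(∂₂ a, ∂₂ b) = 0`.
The first relation cancels two terms of the third, and the second with antisymmetry turns
`C₁₃(a, ∂₂ b)` into `C₁₁(a, b)`, so `C₁₁(a, b) = -C₂₃(∂₂ a, ∂₂ b) = C₃₂(∂₂ b, ∂₂ a)`.
Exchanging `a` and `b` and using antisymmetry of `C₁₁` gives the claim.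
-/

/-- For a multiplicative alternating bilinear form `ω` on
`V₂ = W₂ × W₁ × W₁ × W₀`, one has `C₁₁(a,a') = -C₃₂(∂₂ a, ∂₂ a')`. -/
theorem stmt_2
    (W0 W1 W2 : Type*)
    [AddCommGroup W0] [Module ℝ W0]
    [AddCommGroup W1] [Module ℝ W1]
    [AddCommGroup W2] [Module ℝ W2]
    (d2 : W2 →ₗ[ℝ] W1) (d1 : W1 →ₗ[ℝ] W0)
    (hd : ∀ a : W2, d1 (d2 a) = 0)
    (ω : (W2 × W1 × W1 × W0) →ₗ[ℝ] (W2 × W1 × W1 × W0) →ₗ[ℝ] ℝ)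
    (halt : ∀ v, ω v v = 0)
    (hmult : ∀ (a b c : W2) (x y z : W1) (m : W0)
        (a' b' c' : W2) (x' y' z' : W1) (m' : W0),
      ω (a, x, y, m) (a', x', y', m')
      - ω (b, x, z, m) (b', x', z', m')
      + ω (c, y, z, m) (c', y', z', m')
      - ω (c - b + a, d2 a + y - x, d2 b + z - x, m - d1 x)
          (c' - b' + a', d2 a' + y' - x', d2 b' + z' - x', m' - d1 x') = 0) :
    ∀ (a a' : W2),
      ω (a, 0, 0, 0) (a', 0, 0, 0) = -ω (0, 0, d2 a, 0) (0, d2 a', 0, 0) := by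
  intro a a'
  have anti : ∀ u v, ω u v = -ω v u := fun u v => (LinearMap.IsAlt.neg halt v u).symm
  have split12 : ∀ (p : W2) (q : W1),
      ((p, q, 0, 0) : W2 × W1 × W1 × W0) = (p, 0, 0, 0) + (0, q, 0, 0) := by
    intro p q; simp
  have split13 : ∀ (p : W2) (q : W1),
      ((-p, 0, q, 0) : W2 × W1 × W1 × W0) = -(p, 0, 0, 0) + (0, 0, q, 0) := by
    intro p q; simp
  have zero4 : ((0, 0, 0, 0) : W2 × W1 × W1 × W0) = 0 := rfl
  -- Multiplicativity on the pairs of generators `(a, c)`, `(b, c)` and `(a, b)`.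
  have hac := hmult a' 0 0 0 0 0 0 0 0 a 0 0 0 0
  have hbc := hmult 0 a 0 0 0 0 0 0 0 a' 0 0 0 0
  have hab := hmult a' 0 0 0 0 0 0 0 a 0 0 0 0 0
  simp only [map_zero, add_zero, zero_add, sub_zero, zero_sub, split12 a' (d2 a'),
    split13 a (d2 a), zero4, map_add, map_neg, LinearMap.add_apply, LinearMap.neg_apply,
    LinearMap.zero_apply] at hac hbc hab
  have h11 := anti (a, 0, 0, 0) (a', 0, 0, 0)
  have h13 := anti (a', 0, 0, 0) (0, 0, d2 a, 0)
  have h23 := anti (0, d2 a', 0, 0) (0, 0, d2 a, 0)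
  linarith
end

section
/- Suppose ω is an alternating bilinear form on V₂ that is multiplicative. Then for all a ∈ W₂ and x ∈ W₁ one has C₄₁(∂₁ x, a) = C₃₂(∂₂ a, x) + C₃₂(x, ∂₂ a); explicitly, ω((0,0,0,∂₁ x),(a,0,0,0)) = ω((0,0,∂₂ a,0),(0,x,0,0)) + ω((0,0,x,0),(0,∂₂ a,0,0)). -/
/-!
The identity follows by evaluating multiplicativity on three pairs of coordinate vectors of `V₃`,
for each of which only the face `f₃` contributes (components `Cᵢⱼ` refer to the slots of `V₂`):
* `(c, x)` gives `C₁₂(a, x) + C₁₃(a, x) + C₁₄(a, ∂₁ x) = 0`;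
* `(b, y)` gives `C₁₂(a, x) = C₃₂(∂₂ a, x)`;
* `(a, z)` gives `C₁₃(a, x) = -C₂₃(∂₂ a, x)`, which is `C₃₂(x, ∂₂ a)` by skew-symmetry.

Skew-symmetry also turns `C₁₄(a, ∂₁ x)` into `-C₄₁(∂₁ x, a)`.
-/

/-- For a multiplicative alternating bilinear form `ω` on
`V₂ = W₂ × W₁ × W₁ × W₀`, one has `C₄₁(∂₁ x, a) = C₃₂(∂₂ a, x) + C₃₂(x, ∂₂ a)`. -/
theorem stmt_3
    (W0 W1 W2 : Type*)
    [AddCommGroup W0] [Module ℝ W0]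
    [AddCommGroup W1] [Module ℝ W1]
    [AddCommGroup W2] [Module ℝ W2]
    (d2 : W2 →ₗ[ℝ] W1) (d1 : W1 →ₗ[ℝ] W0)
    (hd : ∀ a : W2, d1 (d2 a) = 0)
    (ω : (W2 × W1 × W1 × W0) →ₗ[ℝ] (W2 × W1 × W1 × W0) →ₗ[ℝ] ℝ)
    (halt : ∀ v, ω v v = 0)
    (hmult : ∀ (a b c : W2) (x y z : W1) (m : W0)
        (a' b' c' : W2) (x' y' z' : W1) (m' : W0),
      ω (a, x, y, m) (a', x', y', m')
      - ω (b, x, z, m) (b', x', z', m')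
      + ω (c, y, z, m) (c', y', z', m')
      - ω (c - b + a, d2 a + y - x, d2 b + z - x, m - d1 x)
          (c' - b' + a', d2 a' + y' - x', d2 b' + z' - x', m' - d1 x') = 0) :
    ∀ (a : W2) (x : W1),
      ω (0, 0, 0, d1 x) (a, 0, 0, 0)
        = ω (0, 0, d2 a, 0) (0, x, 0, 0) + ω (0, 0, x, 0) (0, d2 a, 0, 0) := by
  intro a x
  have skew : ∀ u v, ω u v = -ω v u := fun u v => by
    have h := halt (u + v)
    simp only [map_add, LinearMap.add_apply, halt] at h
    linarith
  have hcx : ω (a, 0, 0, 0) (0, -x, -x, -d1 x) = 0 := by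
    simpa [← Prod.zero_eq_mk] using hmult 0 0 a 0 0 0 0 0 0 0 x 0 0 0
  have hby : ω (-a, 0, d2 a, 0) (0, x, 0, 0) = 0 := by
    simpa [← Prod.zero_eq_mk] using hmult 0 a 0 0 0 0 0 0 0 0 0 x 0 0
  have haz : ω (a, d2 a, 0, 0) (0, 0, x, 0) = 0 := by
    simpa [← Prod.zero_eq_mk] using hmult a 0 0 0 0 0 0 0 0 0 0 0 x 0
  have e1 : ((0, -x, -x, -d1 x) : W2 × W1 × W1 × W0)
      = -((0, x, 0, 0) + (0, 0, x, 0) + (0, 0, 0, d1 x)) := by simp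
  have e2 : ((-a, 0, d2 a, 0) : W2 × W1 × W1 × W0)
      = -(a, 0, 0, 0) + (0, 0, d2 a, 0) := by simp
  have e3 : ((a, d2 a, 0, 0) : W2 × W1 × W1 × W0)
      = (a, 0, 0, 0) + (0, d2 a, 0, 0) := by simp
  rw [e1, map_neg, map_add, map_add] at hcx
  rw [e2, map_add, map_neg, LinearMap.add_apply, LinearMap.neg_apply] at hby
  rw [e3, map_add, LinearMap.add_apply] at haz
  have s1 := skew (0, 0, 0, d1 x) (a, 0, 0, 0)
  have s2 := skew (0, d2 a, 0, 0) (0, 0, x, 0)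
  linarith
end

section
/- (Uniqueness part of the classification of constant multiplicative 2-forms.) If ω and ω' are alternating bilinear forms on V₂ that are both normalized and multiplicative, and if their components agree, i.e. C₄₁(m,a) = C₄₁'(m,a) for all m ∈ W₀, a ∈ W₂ and C₃₂(x,x') = C₃₂'(x,x') for all x, x' ∈ W₁, then ω = ω'. -/
/-!
By linearity the theorem says that a form `η = ω - ω'` which is alternating, normalized and
multiplicative, and whose components `C₄₁` and `C₃₂` vanish, is zero. Write `Cᵢⱼ` for the
components of `η` with respect to the four factors of `V₂`.

Normalization along `σ₁` kills `C₃₃`, `C₃₄` and `C₄₄`; normalization along `σ₀` then kills `C₂₂` and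
`C₂₄`. Only `C₁₁`, `C₁₂` and `C₁₃` remain, and multiplicativity on pairs of coordinate vectors of
`V₃` determines them: the pair `(b, y)` gives `C₁₂(b, y) = C₃₂(∂₂b, y)`, the pair `(c, x)` gives
`C₁₂(c, x) + C₁₃(c, x) + C₁₄(c, ∂₁x) = 0`, and the pair `(c, b)` gives `C₁₁(c, b) = C₁₃(c, ∂₂b)`.
-/

/-- A normalized multiplicative alternating form with `C₄₁ = 0` and `C₃₂ = 0` vanishes. -/
theorem eq_zero_of_components_eq_zero
    {W0 W1 W2 : Type*}
    [AddCommGroup W0] [Module ℝ W0]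
    [AddCommGroup W1] [Module ℝ W1]
    [AddCommGroup W2] [Module ℝ W2]
    (d2 : W2 →ₗ[ℝ] W1) (d1 : W1 →ₗ[ℝ] W0)
    (η : (W2 × W1 × W1 × W0) →ₗ[ℝ] (W2 × W1 × W1 × W0) →ₗ[ℝ] ℝ)
    (halt : ∀ v, η v v = 0)
    (hnorm : ∀ (x x' : W1) (m m' : W0),
        η (0, x, x, m) (0, x', x', m') = 0 ∧ η (0, 0, x, m) (0, 0, x', m') = 0)
    (hmult : ∀ (a b c : W2) (x y z : W1) (m : W0)
        (a' b' c' : W2) (x' y' z' : W1) (m' : W0),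
      η (a, x, y, m) (a', x', y', m')
      - η (b, x, z, m) (b', x', z', m')
      + η (c, y, z, m) (c', y', z', m')
      - η (c - b + a, d2 a + y - x, d2 b + z - x, m - d1 x)
          (c' - b' + a', d2 a' + y' - x', d2 b' + z' - x', m' - d1 x') = 0)
    (hC41 : ∀ (m : W0) (a : W2), η (0, 0, 0, m) (a, 0, 0, 0) = 0)
    (hC32 : ∀ x x' : W1, η (0, 0, x, 0) (0, x', 0, 0) = 0) :
    η = 0 := by
  have skew : ∀ u v, η u v = -η v u := fun u v => by
    have h := halt (u + v)
    simp only [map_add, LinearMap.add_apply, halt] at h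
    linarith
  have split : ∀ (a : W2) (x y : W1) (m : W0), ((a, x, y, m) : W2 × W1 × W1 × W0)
      = (a, 0, 0, 0) + (0, x, 0, 0) + (0, 0, y, 0) + (0, 0, 0, m) := by
    intros; simp
  have zero4 : ((0, 0, 0, 0) : W2 × W1 × W1 × W0) = 0 := rfl
  have C33 : ∀ x x', η (0, 0, x, 0) (0, 0, x', 0) = 0 := fun x x' => (hnorm x x' 0 0).2
  have C34 : ∀ x m, η (0, 0, x, 0) (0, 0, 0, m) = 0 := fun x m => (hnorm x 0 0 m).2
  have C43 : ∀ m x, η (0, 0, 0, m) (0, 0, x, 0) = 0 := fun m x => (hnorm 0 x m 0).2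
  have C44 : ∀ m m', η (0, 0, 0, m) (0, 0, 0, m') = 0 := fun m m' => (hnorm 0 0 m m').2
  have C14 : ∀ a m, η (a, 0, 0, 0) (0, 0, 0, m) = 0 := fun a m => by
    rw [skew, hC41, neg_zero]
  have C23 : ∀ x x', η (0, x, 0, 0) (0, 0, x', 0) = 0 := fun x x' => by
    rw [skew, hC32, neg_zero]
  have C22 : ∀ x x', η (0, x, 0, 0) (0, x', 0, 0) = 0 := fun x x' => by
    have h := (hnorm x x' 0 0).1
    rw [split 0 x x 0, split 0 x' x' 0] at h
    simpa only [map_add, LinearMap.add_apply, zero4, map_zero, LinearMap.zero_apply,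
      hC32, C23, C33, add_zero, zero_add] using h
  have C24 : ∀ x m, η (0, x, 0, 0) (0, 0, 0, m) = 0 := fun x m => by
    have h := (hnorm x 0 0 m).1
    rw [split 0 x x 0] at h
    simpa only [map_add, LinearMap.add_apply, zero4, map_zero, LinearMap.zero_apply,
      C34, add_zero, zero_add] using h
  have C42 : ∀ m x, η (0, 0, 0, m) (0, x, 0, 0) = 0 := fun m x => by
    rw [skew, C24, neg_zero]
  have C12 : ∀ a x, η (a, 0, 0, 0) (0, x, 0, 0) = 0 := fun a x => by
    have h := hmult 0 a 0 0 0 0 0 0 0 0 0 x 0 0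
    simp only [map_zero, sub_zero, add_zero, zero_add, zero_sub, zero4,
      LinearMap.zero_apply] at h
    rw [split (-a) 0 (d2 a) 0] at h
    have e : ((-a, 0, 0, 0) : W2 × W1 × W1 × W0) = -(a, 0, 0, 0) := by simp
    simpa only [e, map_add, map_neg, LinearMap.add_apply, LinearMap.neg_apply, zero4,
      map_zero, LinearMap.zero_apply, hC32, add_zero, zero_add, neg_neg] using h
  have C13 : ∀ a x, η (a, 0, 0, 0) (0, 0, x, 0) = 0 := fun a x => by
    have h := hmult 0 0 a 0 0 0 0 0 0 0 (-x) 0 0 0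
    simp only [map_zero, map_neg, sub_zero, add_zero, zero_add, zero_sub, neg_neg,
      zero4, LinearMap.zero_apply] at h
    rw [split 0 x x (d1 x)] at h
    simpa only [map_add, zero4, map_zero, C12, C14, add_zero, zero_add,
      neg_eq_zero] using h
  have C11 : ∀ a a', η (a, 0, 0, 0) (a', 0, 0, 0) = 0 := fun a a' => by
    have h := hmult 0 0 a 0 0 0 0 0 (-a') 0 0 0 0 0
    simp only [map_zero, map_neg, sub_zero, add_zero, zero_add, zero_sub, neg_neg,
      zero4, LinearMap.zero_apply] at h
    rw [split a' 0 (-d2 a') 0] at h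
    simpa only [map_add, zero4, map_zero, C13, add_zero, zero_add,
      neg_eq_zero] using h
  have C21 : ∀ x a, η (0, x, 0, 0) (a, 0, 0, 0) = 0 := fun x a => by
    rw [skew, C12, neg_zero]
  have C31 : ∀ x a, η (0, 0, x, 0) (a, 0, 0, 0) = 0 := fun x a => by
    rw [skew, C13, neg_zero]
  refine LinearMap.ext fun ⟨a, x, y, m⟩ => LinearMap.ext fun ⟨a', x', y', m'⟩ => ?_
  rw [split a x y m, split a' x' y' m']
  simp only [map_add, LinearMap.add_apply, LinearMap.zero_apply, C11, C12, C13, C14, C21, C22, C23,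
    C24, C31, hC32, C33, C34, hC41, C42, C43, C44, add_zero]

/-- uniqueness part of the classification of constant multiplicative
2-forms: two alternating, normalized, multiplicative bilinear forms on
`V₂ = W₂ × W₁ × W₁ × W₀` with the same components `C₄₁` and `C₃₂` are equal. -/
theorem stmt_5
    (W0 W1 W2 : Type*)
    [AddCommGroup W0] [Module ℝ W0]
    [AddCommGroup W1] [Module ℝ W1]
    [AddCommGroup W2] [Module ℝ W2]
    (d2 : W2 →ₗ[ℝ] W1) (d1 : W1 →ₗ[ℝ] W0)
    (hd : ∀ a : W2, d1 (d2 a) = 0)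
    (ω ω' : (W2 × W1 × W1 × W0) →ₗ[ℝ] (W2 × W1 × W1 × W0) →ₗ[ℝ] ℝ)
    (halt : ∀ v, ω v v = 0)
    (halt' : ∀ v, ω' v v = 0)
    (hnorm : ∀ (x x' : W1) (m m' : W0),
        ω (0, x, x, m) (0, x', x', m') = 0 ∧ ω (0, 0, x, m) (0, 0, x', m') = 0)
    (hnorm' : ∀ (x x' : W1) (m m' : W0),
        ω' (0, x, x, m) (0, x', x', m') = 0 ∧ ω' (0, 0, x, m) (0, 0, x', m') = 0)
    (hmult : ∀ (a b c : W2) (x y z : W1) (m : W0)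
        (a' b' c' : W2) (x' y' z' : W1) (m' : W0),
      ω (a, x, y, m) (a', x', y', m')
      - ω (b, x, z, m) (b', x', z', m')
      + ω (c, y, z, m) (c', y', z', m')
      - ω (c - b + a, d2 a + y - x, d2 b + z - x, m - d1 x)
          (c' - b' + a', d2 a' + y' - x', d2 b' + z' - x', m' - d1 x') = 0)
    (hmult' : ∀ (a b c : W2) (x y z : W1) (m : W0)
        (a' b' c' : W2) (x' y' z' : W1) (m' : W0),
      ω' (a, x, y, m) (a', x', y', m')
      - ω' (b, x, z, m) (b', x', z', m')
      + ω' (c, y, z, m) (c', y', z', m')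
      - ω' (c - b + a, d2 a + y - x, d2 b + z - x, m - d1 x)
          (c' - b' + a', d2 a' + y' - x', d2 b' + z' - x', m' - d1 x') = 0)
    (hC41 : ∀ (m : W0) (a : W2),
        ω (0, 0, 0, m) (a, 0, 0, 0) = ω' (0, 0, 0, m) (a, 0, 0, 0))
    (hC32 : ∀ x x' : W1,
        ω (0, 0, x, 0) (0, x', 0, 0) = ω' (0, 0, x, 0) (0, x', 0, 0)) :
    ω = ω' := by
  refine sub_eq_zero.1 (eq_zero_of_components_eq_zero d2 d1 (ω - ω') ?_ ?_ ?_ ?_ ?_)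
  · intro v
    simp only [LinearMap.sub_apply, halt, halt', sub_zero]
  · intro x x' m m'
    simp only [LinearMap.sub_apply, (hnorm x x' m m').1, (hnorm x x' m m').2,
      (hnorm' x x' m m').1, (hnorm' x x' m m').2, sub_zero, and_self]
  · intro a b c x y z m a' b' c' x' y' z' m'
    have h := hmult a b c x y z m a' b' c' x' y' z' m'
    have h' := hmult' a b c x y z m a' b' c' x' y' z' m'
    simp only [LinearMap.sub_apply]
    linarith
  · intro m a
    simp only [LinearMap.sub_apply, hC41, sub_self]
  · intro x x'
    simp only [LinearMap.sub_apply, hC32, sub_self]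
end

section
/- (Existence part of the classification of constant multiplicative 2-forms.) Let c : W₀ × W₂ → ℝ and b : W₁ × W₁ → ℝ be bilinear maps satisfying c(∂₁ x, a) = b(∂₂ a, x) + b(x, ∂₂ a) for all a ∈ W₂ and x ∈ W₁. Define the bilinear form ω on V₂ by ω((a,x,y,m),(a',x',y',m')) = −b(∂₂a, ∂₂a') + b(∂₂a, x') + b(y', ∂₂a) − c(m', a) − b(∂₂a', x) + b(x', x) − b(x, x') − b(y', x) − b(y, ∂₂a') + b(y, x') + c(m, a'). Then ω is alternating, normalized, and multiplicative, and its components satisfy C₄₁ = c and C₃₂ = b. -/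
/-!
Since `∂₁ ∘ ∂₂ = 0`, the compatibility condition forces `b` to be skew on the image of `∂₂`.
This kills the only term `-b(∂₂a, ∂₂a)` of `ω(v, v)` that does not cancel by itself. In the
alternating sum over the four faces, expand by bilinearity and rewrite every `c(∂₁x, a)` through
`b`: what is left is a combination of the skewness relations for `b` on the image of `∂₂`.
Normalization and the two components are read off from the formula.
-/

/-- The constant 2-form on `V₂ = W₂ × W₁ × W₁ × W₀` built from a bilinear pairing
`c : W₀ × W₂ → ℝ` and a bilinear form `b` on `W₁`:
`ω((a,x,y,m),(a',x',y',m')) = −b(∂₂a, ∂₂a') + b(∂₂a, x') + b(y', ∂₂a) − c(m', a)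
 − b(∂₂a', x) + b(x', x) − b(x, x') − b(y', x) − b(y, ∂₂a') + b(y, x') + c(m, a')`. -/
def constantForm
    {W0 W1 W2 : Type*}
    [AddCommGroup W0] [Module ℝ W0]
    [AddCommGroup W1] [Module ℝ W1]
    [AddCommGroup W2] [Module ℝ W2]
    (d2 : W2 →ₗ[ℝ] W1)
    (c : W0 →ₗ[ℝ] W2 →ₗ[ℝ] ℝ) (b : W1 →ₗ[ℝ] W1 →ₗ[ℝ] ℝ)
    (p q : W2 × W1 × W1 × W0) : ℝ :=
  -(b (d2 p.1) (d2 q.1)) + b (d2 p.1) q.2.1 + b q.2.2.1 (d2 p.1) - c q.2.2.2 p.1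
    - b (d2 q.1) p.2.1 + b q.2.1 p.2.1 - b p.2.1 q.2.1 - b q.2.2.1 p.2.1
    - b p.2.2.1 (d2 q.1) + b p.2.2.1 q.2.1 + c p.2.2.2 q.1

/-- existence part of the classification of constant multiplicative
2-forms: if `c(∂₁ x, a) = b(∂₂ a, x) + b(x, ∂₂ a)` for all `a, x`, then the form
`constantForm d2 c b` is alternating, normalized, and multiplicative, and its
components satisfy `C₄₁ = c` and `C₃₂ = b`. -/
theorem stmt_6
    (W0 W1 W2 : Type*)
    [AddCommGroup W0] [Module ℝ W0]
    [AddCommGroup W1] [Module ℝ W1]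
    [AddCommGroup W2] [Module ℝ W2]
    (d2 : W2 →ₗ[ℝ] W1) (d1 : W1 →ₗ[ℝ] W0)
    (hd : ∀ a : W2, d1 (d2 a) = 0)
    (c : W0 →ₗ[ℝ] W2 →ₗ[ℝ] ℝ) (b : W1 →ₗ[ℝ] W1 →ₗ[ℝ] ℝ)
    (hcb : ∀ (a : W2) (x : W1), c (d1 x) a = b (d2 a) x + b x (d2 a)) :
    (∀ v, constantForm d2 c b v v = 0)
    ∧ (∀ (x x' : W1) (m m' : W0),
        constantForm d2 c b (0, x, x, m) (0, x', x', m') = 0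
        ∧ constantForm d2 c b (0, 0, x, m) (0, 0, x', m') = 0)
    ∧ (∀ (a b' c' : W2) (x y z : W1) (m : W0)
        (a' b'' c'' : W2) (x' y' z' : W1) (m' : W0),
      constantForm d2 c b (a, x, y, m) (a', x', y', m')
      - constantForm d2 c b (b', x, z, m) (b'', x', z', m')
      + constantForm d2 c b (c', y, z, m) (c'', y', z', m')
      - constantForm d2 c b (c' - b' + a, d2 a + y - x, d2 b' + z - x, m - d1 x)
          (c'' - b'' + a', d2 a' + y' - x', d2 b'' + z' - x', m' - d1 x') = 0)
    ∧ (∀ (m : W0) (a : W2), constantForm d2 c b (0, 0, 0, m) (a, 0, 0, 0) = c m a)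
    ∧ (∀ x x' : W1, constantForm d2 c b (0, 0, x, 0) (0, x', 0, 0) = b x x') := by
  -- The compatibility condition evaluated at `x` in the image of `∂₂`, where `∂₁ x = 0`.
  have hskew : ∀ a a' : W2, b (d2 a) (d2 a') = -b (d2 a') (d2 a) := by
    intro a a'
    have h := hcb a (d2 a')
    rw [hd, map_zero, LinearMap.zero_apply] at h
    linarith
  refine ⟨?_, ?_, ?_, ?_, ?_⟩
  · rintro ⟨a, x, y, m⟩
    have h := hskew a a
    simp only [constantForm]
    linarith
  · intro x x' m m'
    constructor
    · simp only [constantForm, map_zero, LinearMap.zero_apply]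
      ring
    · simp [constantForm]
  · intro a b' c' x y z m a' b'' c'' x' y' z' m'
    simp only [constantForm, map_add, map_sub, LinearMap.add_apply, LinearMap.sub_apply, hcb]
    -- The remaining terms of the alternating sum pair `∂₂` of two elements of `W₂`.
    linarith [hskew a a', hskew a b'', hskew a c'', hskew b' a', hskew b' b'', hskew b' c'',
      hskew c' a', hskew c' b'', hskew c' c'']
  · intro m a
    simp [constantForm]
  · intro x x'
    simp [constantForm]
end

section
/- Let ω be an alternating, normalized bilinear form on V₂. Then: (i) for all m ∈ W₀ and all (a,x,y,m') ∈ V₂, ω((0,0,0,m),(a,x,y,m')) = C₄₁(m,a); (ii) for all (x,n), (x',n') ∈ V₁, ω(σ₁(x,n), σ₀(x',n')) + ω(σ₁(x',n'), σ₀(x,n)) = C₃₂(x,x') + C₃₂(x',x). Consequently, ω is simplicially nondegenerate — i.e. (a) ω((0,0,0,m),w) = 0 for all w ∈ V₂ implies m = 0, (b) ω((0,0,0,m),w) = 0 for all m ∈ W₀ implies the W₂-component of w is 0, and (c) ω(σ₁θ,σ₀η) + ω(σ₁η,σ₀θ) = 0 for all η ∈ V₁ implies the W₁-component of θ is 0 —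 if and only if the pairing C₄₁ is nondegenerate and the symmetric bilinear form (x,x') ↦ C₃₂(x,x') + C₃₂(x',x) on W₁ is nondegenerate. -/
/-!
Everything rests on two splittings of vectors of `V₂` along the degeneracies:
`(a,x,y,m') = (a,0,0,0) + σ₀(x,m') + σ₁(y-x,0)` and `σ₀(x,n) = (0,x,0,0) + σ₁(x,n)`.
Since `(0,0,0,m) = σ₀(0,m) = σ₁(0,m)`, normalization kills the last two summands of the first
splitting when paired with `(0,0,0,m)`, which gives (i). The second splitting together with
(i) for `a = 0` gives `ω(σ₁(x,n), σ₀(x',n')) = C₃₂(x,x')`, hence (ii). The equivalence is then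
a rewriting of each nondegeneracy condition by (i) or (ii).
-/

/-- for an alternating, normalized bilinear form `ω` on
`V₂ = W₂ × W₁ × W₁ × W₀`:
(i) `ω((0,0,0,m),(a,x,y,m')) = C₄₁(m,a)`;
(ii) `ω(σ₁θ, σ₀η) + ω(σ₁η, σ₀θ) = C₃₂(x,x') + C₃₂(x',x)` for `θ = (x,n)`, `η = (x',n')`;
and consequently `ω` is simplicially nondegenerate iff `C₄₁` is nondegenerate and
the symmetric part of `C₃₂` is nondegenerate. -/
theorem stmt_7
    (W0 W1 W2 : Type*)
    [AddCommGroup W0] [Module ℝ W0]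
    [AddCommGroup W1] [Module ℝ W1]
    [AddCommGroup W2] [Module ℝ W2]
    (d2 : W2 →ₗ[ℝ] W1) (d1 : W1 →ₗ[ℝ] W0)
    (hd : ∀ a : W2, d1 (d2 a) = 0)
    (ω : (W2 × W1 × W1 × W0) →ₗ[ℝ] (W2 × W1 × W1 × W0) →ₗ[ℝ] ℝ)
    (halt : ∀ v, ω v v = 0)
    (hnorm : ∀ (x x' : W1) (m m' : W0),
        ω (0, x, x, m) (0, x', x', m') = 0 ∧ ω (0, 0, x, m) (0, 0, x', m') = 0) :
    -- (i)
    (∀ (m : W0) (a : W2) (x y : W1) (m' : W0),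
        ω (0, 0, 0, m) (a, x, y, m') = ω (0, 0, 0, m) (a, 0, 0, 0))
    -- (ii)
    ∧ (∀ (x x' : W1) (n n' : W0),
        ω (0, 0, x, n) (0, x', x', n') + ω (0, 0, x', n') (0, x, x, n)
          = ω (0, 0, x, 0) (0, x', 0, 0) + ω (0, 0, x', 0) (0, x, 0, 0))
    -- simplicial nondegeneracy ↔ nondegeneracy of C₄₁ and of the symmetric part of C₃₂
    ∧ (((∀ m : W0, (∀ w : W2 × W1 × W1 × W0, ω (0, 0, 0, m) w = 0) → m = 0)
        ∧ (∀ w : W2 × W1 × W1 × W0, (∀ m : W0, ω (0, 0, 0, m) w = 0) → w.1 = 0)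
        ∧ (∀ θ : W1 × W0, (∀ η : W1 × W0,
            ω (0, 0, θ.1, θ.2) (0, η.1, η.1, η.2)
              + ω (0, 0, η.1, η.2) (0, θ.1, θ.1, θ.2) = 0) → θ.1 = 0))
      ↔ ((∀ m : W0, (∀ a : W2, ω (0, 0, 0, m) (a, 0, 0, 0) = 0) → m = 0)
        ∧ (∀ a : W2, (∀ m : W0, ω (0, 0, 0, m) (a, 0, 0, 0) = 0) → a = 0)
        ∧ (∀ x : W1, (∀ x' : W1,
            ω (0, 0, x, 0) (0, x', 0, 0) + ω (0, 0, x', 0) (0, x, 0, 0) = 0) → x = 0))) := by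
  have h1 : ∀ (m : W0) (a : W2) (x y : W1) (m' : W0),
      ω (0, 0, 0, m) (a, x, y, m') = ω (0, 0, 0, m) (a, 0, 0, 0) := by
    intro m a x y m'
    have e : ((a, x, y, m') : W2 × W1 × W1 × W0)
        = (a, 0, 0, 0) + (0, x, x, m') + (0, 0, y - x, 0) := by simp
    rw [e, map_add, map_add, (hnorm 0 x m m').1, (hnorm 0 (y - x) m 0).2, add_zero, add_zero]
  have h2 : ∀ (x x' : W1) (n n' : W0),
      ω (0, 0, x, n) (0, x', x', n') = ω (0, 0, x, 0) (0, x', 0, 0) := by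
    intro x x' n n'
    have e : ((0, x', x', n') : W2 × W1 × W1 × W0) = (0, x', 0, 0) + (0, 0, x', n') := by simp
    have e' : ((0, 0, x, n) : W2 × W1 × W1 × W0) = (0, 0, x, 0) + (0, 0, 0, n) := by simp
    have h0 : ω (0, 0, 0, n) (0, x', 0, 0) = 0 := by
      rw [h1]
      exact map_zero (ω (0, 0, 0, n))
    rw [e, map_add, (hnorm x x' n n').2, add_zero, e', map_add, LinearMap.add_apply, h0, add_zero]
  refine ⟨h1, fun x x' n n' => by rw [h2, h2], ?_, ?_⟩
  · rintro ⟨ha, hb, hc⟩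
    refine ⟨fun m hm => ha m ?_, fun a h => hb (a, 0, 0, 0) h, fun x hx => hc (x, 0) ?_⟩
    · rintro ⟨a, x, y, m'⟩
      rw [h1]
      exact hm a
    · rintro ⟨x', n'⟩
      rw [h2, h2]
      exact hx x'
  · rintro ⟨ha, hb, hc⟩
    refine ⟨fun m hm => ha m fun a => hm _, ?_, ?_⟩
    · rintro ⟨a, x, y, m'⟩ h
      exact hb a fun m => (h1 m a x y m').symm.trans (h m)
    · rintro ⟨x, n⟩ h
      refine hc x fun x' => ?_
      rw [← h2 x x' n 0, ← h2 x' x 0 n]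
      exact h (x', 0)
end

section
/- Let ω and ω' be alternating bilinear forms on V₂ that are both normalized and multiplicative, with components (C₄₁, C₃₂) and (C₄₁', C₃₂') respectively. Then the following are equivalent: (i) there exists an alternating bilinear form α on V₁ such that α((0,m),(0,m')) = 0 for all m, m' ∈ W₀, α((0,m),(∂₂ a, 0)) = 0 for all m ∈ W₀ and a ∈ W₂, α((0,∂₁ x),(x',0)) + α((0,∂₁ x'),(x,0)) = 0 for all x, x' ∈ W₁, and ω' − ω = δα, where δα(u,v) := α(g₀u, g₀v) − α(g₁u, g₁v) + α(g₂u, g₂v); (ii) C₄₁' = C₄₁ and the symmetric parts agree: C₃₂'(x,x') + C₃₂'(x',x) = C₃₂(x,x') + C₃₂(x',x) for all x, x' ∈ W₁. -/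
/-!
The difference `ω' - ω` is again alternating, normalized and multiplicative, so everything is
about one such form `θ`. The key fact (`eq_zero_of_components`) is rigidity: if the components
`C₄₁` and `C₃₂` of `θ` vanish, then `θ = 0`. Together with `C₃₂ = 0`, normalization kills all
the blocks of `θ` that do not involve `W₂`, and evaluating multiplicativity on vectors with a single nonzero coordinate
kills the others.

For (ii) ⇒ (i), `C₃₂` of `ω' - ω` is antisymmetric, so `α((x,m),(x',m')) := -C₃₂(x,x')` is
alternating and vanishes as soon as one argument lies in `W₀`. The form `δα` is normalized, is
multiplicative by the simplicial identities, and has `C₄₁ = 0` and the same `C₃₂` as `ω' - ω`;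
rigidity gives `ω' - ω = δα`. For (i) ⇒ (ii), the two components of `δα` are computed directly:
`C₄₁(m,a) = α((0,m),(∂₂a,0)) = 0`, and `C₃₂(x,x') + C₃₂(x',x)` is
`α((0,∂₁x),(x',0)) + α((0,∂₁x'),(x,0)) = 0`.
-/

/-- An alternating, normalized, multiplicative form on `W₂ × W₁ × W₁ × W₀` whose components
`C₄₁` and `C₃₂` vanish is zero. -/
lemma eq_zero_of_components {W0 W1 W2 : Type*}
    [AddCommGroup W0] [Module ℝ W0] [AddCommGroup W1] [Module ℝ W1]
    [AddCommGroup W2] [Module ℝ W2]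
    (d2 : W2 →ₗ[ℝ] W1) (d1 : W1 →ₗ[ℝ] W0)
    (θ : (W2 × W1 × W1 × W0) →ₗ[ℝ] (W2 × W1 × W1 × W0) →ₗ[ℝ] ℝ)
    (halt : ∀ v, θ v v = 0)
    (hnorm : ∀ (x x' : W1) (m m' : W0),
        θ (0, x, x, m) (0, x', x', m') = 0 ∧ θ (0, 0, x, m) (0, 0, x', m') = 0)
    (hmult : ∀ (a b c : W2) (x y z : W1) (m : W0)
        (a' b' c' : W2) (x' y' z' : W1) (m' : W0),
      θ (a, x, y, m) (a', x', y', m')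
      - θ (b, x, z, m) (b', x', z', m')
      + θ (c, y, z, m) (c', y', z', m')
      - θ (c - b + a, d2 a + y - x, d2 b + z - x, m - d1 x)
          (c' - b' + a', d2 a' + y' - x', d2 b' + z' - x', m' - d1 x') = 0)
    (h41 : ∀ (m : W0) (a : W2), θ (0, 0, 0, m) (a, 0, 0, 0) = 0)
    (h32 : ∀ x x' : W1, θ (0, 0, x, 0) (0, x', 0, 0) = 0)
    (u v : W2 × W1 × W1 × W0) : θ u v = 0 := by
  have skew : ∀ u v, θ u v = - θ v u := fun u v => (LinearMap.IsAlt.neg halt v u).symm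
  have h23 : ∀ x x' : W1, θ (0, x, 0, 0) (0, 0, x', 0) = 0 := fun x x' => by
    rw [skew, h32, neg_zero]
  have split : ∀ (a : W2) (x y : W1) (m : W0), ((a, x, y, m) : W2 × W1 × W1 × W0)
      = (a, 0, 0, 0) + (0, x, 0, 0) + (0, 0, y, 0) + (0, 0, 0, m) := by
    intro a x y m; simp
  have z1 : ∀ v, θ (0, 0, 0, 0) v = 0 := fun v => LinearMap.map_zero₂ θ v
  have z2 : ∀ u, θ u (0, 0, 0, 0) = 0 := fun u => map_zero (θ u)
  have h33 : ∀ x x' : W1, θ (0, 0, x, 0) (0, 0, x', 0) = 0 := fun x x' => (hnorm x x' 0 0).2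
  have h34 : ∀ (x : W1) (m : W0), θ (0, 0, x, 0) (0, 0, 0, m) = 0 :=
    fun x m => (hnorm x 0 0 m).2
  have h44 : ∀ m m' : W0, θ (0, 0, 0, m) (0, 0, 0, m') = 0 := fun m m' => (hnorm 0 0 m m').2
  have h22 : ∀ x x' : W1, θ (0, x, 0, 0) (0, x', 0, 0) = 0 := fun x x' => by
    have h := (hnorm x x' 0 0).1
    rw [split 0 x x 0, split 0 x' x' 0] at h
    simpa only [map_add, LinearMap.add_apply, z1, z2, h32, h23, h33, add_zero, zero_add, sub_zero, zero_sub,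
      neg_eq_zero] using h
  have h24 : ∀ (x : W1) (m : W0), θ (0, x, 0, 0) (0, 0, 0, m) = 0 := fun x m => by
    have h := (hnorm x 0 0 m).1
    rw [split 0 x x 0] at h
    simpa only [map_add, LinearMap.add_apply, z1, z2, h34, add_zero, zero_add, sub_zero, zero_sub,
      neg_eq_zero] using h
  -- Multiplicativity on `(z)` and `(a)`: `C₃₁(z, a) + C₃₂(z, ∂₂ a) = 0`.
  have h31 : ∀ (z : W1) (a : W2), θ (0, 0, z, 0) (a, 0, 0, 0) = 0 := fun z a => by
    have h := hmult 0 0 0 0 0 z 0 a 0 0 0 0 0 0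
    simp only [map_zero, sub_zero, zero_add, add_zero, sub_self] at h
    rw [split a (d2 a) 0 0] at h
    simpa only [map_add, LinearMap.add_apply, z1, z2, h32, add_zero, zero_add, sub_zero, zero_sub,
      neg_eq_zero] using h
  -- Multiplicativity on `(x)` and `(c)`: `C₂₁(x, c) + C₃₁(x, c) + C₄₁(∂₁ x, c) = 0`.
  have h21 : ∀ (x : W1) (c : W2), θ (0, x, 0, 0) (c, 0, 0, 0) = 0 := fun x c => by
    have h := hmult 0 0 0 (-x) 0 0 0 0 0 c 0 0 0 0
    simp only [map_zero, map_neg, sub_zero, zero_add, add_zero, sub_self, sub_neg_eq_add] at h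
    rw [split 0 x x (d1 x)] at h
    simpa only [map_add, LinearMap.add_apply, z1, z2, h31, h41, add_zero, zero_add, sub_zero, zero_sub,
      neg_eq_zero] using h
  -- Multiplicativity on `(b)` and `(c)`: `C₁₁(b, c) = C₃₁(∂₂ b, c)`.
  have h11 : ∀ (b c : W2), θ (b, 0, 0, 0) (c, 0, 0, 0) = 0 := fun b c => by
    have h := hmult 0 (-b) 0 0 0 0 0 0 0 c 0 0 0 0
    simp only [map_zero, map_neg, sub_zero, zero_add, add_zero, sub_self, sub_neg_eq_add] at h
    rw [split b 0 (-d2 b) 0] at h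
    simpa only [map_add, LinearMap.add_apply, z1, z2, h31, add_zero, zero_add, sub_zero, zero_sub,
      neg_eq_zero] using h
  have h12 : ∀ (c : W2) (x : W1), θ (c, 0, 0, 0) (0, x, 0, 0) = 0 := fun c x => by
    rw [skew, h21, neg_zero]
  have h13 : ∀ (c : W2) (x : W1), θ (c, 0, 0, 0) (0, 0, x, 0) = 0 := fun c x => by
    rw [skew, h31, neg_zero]
  have h14 : ∀ (c : W2) (m : W0), θ (c, 0, 0, 0) (0, 0, 0, m) = 0 := fun c x => by
    rw [skew, h41, neg_zero]
  have h42 : ∀ (m : W0) (x : W1), θ (0, 0, 0, m) (0, x, 0, 0) = 0 := fun c x => by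
    rw [skew, h24, neg_zero]
  have h43 : ∀ (m : W0) (x : W1), θ (0, 0, 0, m) (0, 0, x, 0) = 0 := fun c x => by
    rw [skew, h34, neg_zero]
  obtain ⟨a, x, y, m⟩ := u
  obtain ⟨a', x', y', m'⟩ := v
  rw [split a x y m, split a' x' y' m']
  simp only [map_add, LinearMap.add_apply, h11, h12, h13, h14, h21, h22, h23, h24, h31, h32, h33,
    h34, h41, h42, h43, h44, add_zero]

/-- for alternating, normalized, multiplicative bilinear forms `ω, ω'` on
`V₂ = W₂ × W₁ × W₁ × W₀`, the existence of an alternating bilinear form `α` on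
`V₁ = W₁ × W₀` satisfying the stated conditions with `ω' − ω = δα` is equivalent to
`C₄₁' = C₄₁` together with the agreement of the symmetric parts of `C₃₂'` and `C₃₂`. -/
theorem stmt_9
    (W0 W1 W2 : Type*)
    [AddCommGroup W0] [Module ℝ W0]
    [AddCommGroup W1] [Module ℝ W1]
    [AddCommGroup W2] [Module ℝ W2]
    (d2 : W2 →ₗ[ℝ] W1) (d1 : W1 →ₗ[ℝ] W0)
    (hd : ∀ a : W2, d1 (d2 a) = 0)
    (ω ω' : (W2 × W1 × W1 × W0) →ₗ[ℝ] (W2 × W1 × W1 × W0) →ₗ[ℝ] ℝ)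
    (halt : ∀ v, ω v v = 0)
    (halt' : ∀ v, ω' v v = 0)
    (hnorm : ∀ (x x' : W1) (m m' : W0),
        ω (0, x, x, m) (0, x', x', m') = 0 ∧ ω (0, 0, x, m) (0, 0, x', m') = 0)
    (hnorm' : ∀ (x x' : W1) (m m' : W0),
        ω' (0, x, x, m) (0, x', x', m') = 0 ∧ ω' (0, 0, x, m) (0, 0, x', m') = 0)
    (hmult : ∀ (a b c : W2) (x y z : W1) (m : W0)
        (a' b' c' : W2) (x' y' z' : W1) (m' : W0),
      ω (a, x, y, m) (a', x', y', m')
      - ω (b, x, z, m) (b', x', z', m')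
      + ω (c, y, z, m) (c', y', z', m')
      - ω (c - b + a, d2 a + y - x, d2 b + z - x, m - d1 x)
          (c' - b' + a', d2 a' + y' - x', d2 b' + z' - x', m' - d1 x') = 0)
    (hmult' : ∀ (a b c : W2) (x y z : W1) (m : W0)
        (a' b' c' : W2) (x' y' z' : W1) (m' : W0),
      ω' (a, x, y, m) (a', x', y', m')
      - ω' (b, x, z, m) (b', x', z', m')
      + ω' (c, y, z, m) (c', y', z', m')
      - ω' (c - b + a, d2 a + y - x, d2 b + z - x, m - d1 x)
          (c' - b' + a', d2 a' + y' - x', d2 b' + z' - x', m' - d1 x') = 0) :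
    -- (i) ↔ (ii)
    ((∃ α : (W1 × W0) →ₗ[ℝ] (W1 × W0) →ₗ[ℝ] ℝ,
        (∀ v, α v v = 0)
        ∧ (∀ m m' : W0, α (0, m) (0, m') = 0)
        ∧ (∀ (m : W0) (a : W2), α (0, m) (d2 a, 0) = 0)
        ∧ (∀ x x' : W1, α (0, d1 x) (x', 0) + α (0, d1 x') (x, 0) = 0)
        ∧ (∀ u v : W2 × W1 × W1 × W0,
            ω' u v - ω u v =
              α (u.2.1, u.2.2.2) (v.2.1, v.2.2.2)
              - α (u.2.2.1, u.2.2.2) (v.2.2.1, v.2.2.2)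
              + α (d2 u.1 + u.2.2.1 - u.2.1, u.2.2.2 - d1 u.2.1)
                  (d2 v.1 + v.2.2.1 - v.2.1, v.2.2.2 - d1 v.2.1)))
    ↔ ((∀ (m : W0) (a : W2),
          ω' (0, 0, 0, m) (a, 0, 0, 0) = ω (0, 0, 0, m) (a, 0, 0, 0))
        ∧ (∀ x x' : W1,
          ω' (0, 0, x, 0) (0, x', 0, 0) + ω' (0, 0, x', 0) (0, x, 0, 0)
            = ω (0, 0, x, 0) (0, x', 0, 0) + ω (0, 0, x', 0) (0, x, 0, 0)))) := by
  constructor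
  · rintro ⟨α, hα, -, h2, h3, h4⟩
    have skew : ∀ u v, α u v = - α v u := fun u v => (LinearMap.IsAlt.neg hα v u).symm
    have z1 : ∀ v, α (0, 0) v = 0 := fun v => LinearMap.map_zero₂ α v
    have z2 : ∀ u, α u (0, 0) = 0 := fun u => map_zero (α u)
    constructor
    · intro m a
      have h := h4 (0, 0, 0, m) (a, 0, 0, 0)
      simp only [map_zero, sub_zero, add_zero, h2, z2] at h
      linarith
    · -- `C₃₂(x, x')` of `δα` is `-α((x,0),(x',∂₁x'))`.
      have key : ∀ x x' : W1, ω' (0, 0, x, 0) (0, x', 0, 0) - ω (0, 0, x, 0) (0, x', 0, 0)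
          = - α (x, 0) (x', 0) + α (0, d1 x') (x, 0) := by
        intro x x'
        have h := h4 (0, 0, x, 0) (0, x', 0, 0)
        have e : ((0 - x', 0 - d1 x') : W1 × W0) = -(x', 0) - (0, d1 x') := by simp
        simp only [map_zero, sub_zero, add_zero, zero_add, z1, z2] at h
        rw [e, map_sub, map_neg, skew (x, 0) (0, d1 x')] at h
        linarith
      intro x x'
      linarith [key x x', key x' x, h3 x x', skew (x, 0) (x', 0)]
  · rintro ⟨h41, h32⟩
    let V2 := W2 × W1 × W1 × W0
    let p0 : V2 →ₗ[ℝ] W1 := LinearMap.fst ℝ _ _ ∘ₗ LinearMap.snd ℝ _ _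
    let p1 : V2 →ₗ[ℝ] W1 := LinearMap.fst ℝ _ _ ∘ₗ LinearMap.snd ℝ _ _ ∘ₗ LinearMap.snd ℝ _ _
    let p2 : V2 →ₗ[ℝ] W1 := d2 ∘ₗ LinearMap.fst ℝ _ _ + p1 - p0
    let i2 : W1 →ₗ[ℝ] V2 := LinearMap.inr ℝ _ _ ∘ₗ LinearMap.inl ℝ _ _
    let i3 : W1 →ₗ[ℝ] V2 := LinearMap.inr ℝ _ _ ∘ₗ LinearMap.inr ℝ _ _ ∘ₗ LinearMap.inl ℝ _ _
    let A : W1 →ₗ[ℝ] W1 →ₗ[ℝ] ℝ := -((ω' - ω).compl₁₂ i3 i2)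
    have hA : ∀ x x', A x x' = -(ω' (0, 0, x, 0) (0, x', 0, 0) - ω (0, 0, x, 0) (0, x', 0, 0)) :=
      fun x x' => rfl
    have hAalt : ∀ x, A x x = 0 := fun x => by
      rw [hA]; linarith [h32 x x]
    -- `A` pulled back along the `W₁`-components of the face maps gives `δα`.
    let θ : V2 →ₗ[ℝ] V2 →ₗ[ℝ] ℝ :=
      ω' - ω - (A.compl₁₂ p0 p0 - A.compl₁₂ p1 p1 + A.compl₁₂ p2 p2)
    have hθ : ∀ (a : W2) (x y : W1) (m : W0) (a' : W2) (x' y' : W1) (m' : W0),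
        θ (a, x, y, m) (a', x', y', m') = ω' (a, x, y, m) (a', x', y', m')
          - ω (a, x, y, m) (a', x', y', m')
          - (A x x' - A y y' + A (d2 a + y - x) (d2 a' + y' - x')) := by
      intros; rfl
    have hzero := eq_zero_of_components d2 d1 θ ?_ ?_ ?_ ?_ ?_
    · refine ⟨A.compl₁₂ (LinearMap.fst ℝ _ _) (LinearMap.fst ℝ _ _),
        fun v => hAalt _, ?_, ?_, ?_, ?_⟩
      · intros; simp
      · intros; simp
      · intros; simp
      · rintro ⟨a, x, y, m⟩ ⟨a', x', y', m'⟩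
        have h := hzero (a, x, y, m) (a', x', y', m')
        rw [hθ] at h
        exact sub_eq_zero.mp h
    · rintro ⟨a, x, y, m⟩
      rw [hθ]; simp only [halt, halt', hAalt]; norm_num
    · intro x x' m m'
      rw [hθ, hθ, (hnorm x x' m m').1, (hnorm x x' m m').2, (hnorm' x x' m m').1,
        (hnorm' x x' m m').2]
      simp
    · intro a b c x y z m a' b' c' x' y' z' m'
      have e : ∀ (a b c : W2) (x y z : W1),
          d2 (c - b + a) + (d2 b + z - x) - (d2 a + y - x) = d2 c + z - y := by
        intro a b c x y z; simp only [map_add, map_sub]; abel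
      simp only [hθ, e]
      linarith [hmult a b c x y z m a' b' c' x' y' z' m',
        hmult' a b c x y z m a' b' c' x' y' z' m']
    · intro m a
      rw [hθ, h41]; simp
    · intro x x'
      rw [hθ]
      simp only [map_zero, zero_add, sub_zero, zero_sub, map_neg, LinearMap.zero_apply, hA x x']
      ring
end

section
/- (Leibniz rule for the constant Courant bracket.) For all smooth maps e₁, e₂ : W₀ → W₁ and every smooth function f : W₀ → ℝ, one has ⟦e₁, f·e₂⟧(p) = (ρ(e₁)f)(p)·e₂(p) + f(p)·⟦e₁,e₂⟧(p) for every p ∈ W₀, where f·e₂ denotes the pointwise scalar multiple p ↦ f(p)e₂(p). -/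
/-- The constant Courant bracket of two smooth maps `e₁ e₂ : W₀ → W₁`:
`⟦e₁,e₂⟧(p) = (De₂)ₚ(∂(e₁(p))) − (De₁)ₚ(∂(e₂(p))) + σ(v ↦ ⟨e₂(p), (De₁)ₚ(v)⟩)`. -/
noncomputable def courantBracket
    {W0 W1 : Type*}
    [NormedAddCommGroup W0] [NormedSpace ℝ W0] [FiniteDimensional ℝ W0]
    [NormedAddCommGroup W1] [NormedSpace ℝ W1] [FiniteDimensional ℝ W1]
    (B : W1 →ₗ[ℝ] W1 →ₗ[ℝ] ℝ)
    (d : W1 →L[ℝ] W0)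
    (σ : (W0 →L[ℝ] ℝ) →ₗ[ℝ] W1)
    (e₁ e₂ : W0 → W1) (p : W0) : W1 :=
  fderiv ℝ e₂ p (d (e₁ p)) - fderiv ℝ e₁ p (d (e₂ p)) +
    σ (LinearMap.toContinuousLinearMap
        ((B (e₂ p)) ∘ₗ (fderiv ℝ e₁ p : W0 →ₗ[ℝ] W1)))

/-- Leibniz rule for the constant Courant bracket:
`⟦e₁, f·e₂⟧(p) = (ρ(e₁)f)(p)·e₂(p) + f(p)·⟦e₁,e₂⟧(p)`. -/
theorem stmt_10
    (W0 W1 : Type*)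
    [NormedAddCommGroup W0] [NormedSpace ℝ W0] [FiniteDimensional ℝ W0]
    [NormedAddCommGroup W1] [NormedSpace ℝ W1] [FiniteDimensional ℝ W1]
    (B : W1 →ₗ[ℝ] W1 →ₗ[ℝ] ℝ)
    (hB : ∀ x y : W1, B x y = B y x)
    (d : W1 →L[ℝ] W0)
    (σ : (W0 →L[ℝ] ℝ) →ₗ[ℝ] W1)
    (hσ : ∀ (ξ : W0 →L[ℝ] ℝ) (w : W1), B (σ ξ) w = ξ (d w))
    (hdσ : ∀ ξ : W0 →L[ℝ] ℝ, d (σ ξ) = 0)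
    (e₁ e₂ : W0 → W1) (f : W0 → ℝ)
    (he₁ : ContDiff ℝ (⊤ : ℕ∞) e₁) (he₂ : ContDiff ℝ (⊤ : ℕ∞) e₂)
    (hf : ContDiff ℝ (⊤ : ℕ∞) f) :
    ∀ p : W0,
      courantBracket B d σ e₁ (fun q => f q • e₂ q) p
        = (fderiv ℝ f p (d (e₁ p))) • e₂ p + f p • courantBracket B d σ e₁ e₂ p := by
  intro p
  have hsmul : fderiv ℝ (fun q => f q • e₂ q) p
      = f p • fderiv ℝ e₂ p + (fderiv ℝ f p).smulRight (e₂ p) :=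
    fderiv_fun_smul (hf.differentiable (by simp) p) (he₂.differentiable (by simp) p)
  -- The two other terms of the bracket depend linearly on `e₂ p` alone, so `f p` factors out of them.
  simp only [courantBracket, hsmul, map_smul, LinearMap.smul_comp, add_apply,
    smul_apply, ContinuousLinearMap.smulRight_apply]
  module
end

section
/- (Invariance of the pairing under the constant Courant bracket.) For all smooth maps e₁, e₂, e₃ : W₀ → W₁ and every p ∈ W₀, one has (Dg)ₚ(∂(e₁(p))) = ⟨⟦e₁,e₂⟧(p), e₃(p)⟩ + ⟨e₂(p), ⟦e₁,e₃⟧(p)⟩, where g : W₀ → ℝ is the function g(q) = ⟨e₂(q), e₃(q)⟩. -/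
/-- invariance of the pairing under the constant Courant bracket:
`ρ(e₁)(⟨e₂,e₃⟩)(p) = ⟨⟦e₁,e₂⟧(p), e₃(p)⟩ + ⟨e₂(p), ⟦e₁,e₃⟧(p)⟩`. -/
theorem stmt_11
    (W0 W1 : Type*)
    [NormedAddCommGroup W0] [NormedSpace ℝ W0] [FiniteDimensional ℝ W0]
    [NormedAddCommGroup W1] [NormedSpace ℝ W1] [FiniteDimensional ℝ W1]
    (B : W1 →ₗ[ℝ] W1 →ₗ[ℝ] ℝ)
    (hB : ∀ x y : W1, B x y = B y x)
    (d : W1 →L[ℝ] W0)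
    (σ : (W0 →L[ℝ] ℝ) →ₗ[ℝ] W1)
    (hσ : ∀ (ξ : W0 →L[ℝ] ℝ) (w : W1), B (σ ξ) w = ξ (d w))
    (hdσ : ∀ ξ : W0 →L[ℝ] ℝ, d (σ ξ) = 0)
    (e₁ e₂ e₃ : W0 → W1)
    (he₁ : ContDiff ℝ (⊤ : ℕ∞) e₁) (he₂ : ContDiff ℝ (⊤ : ℕ∞) e₂)
    (he₃ : ContDiff ℝ (⊤ : ℕ∞) e₃) :
    ∀ p : W0,
      fderiv ℝ (fun q => B (e₂ q) (e₃ q)) p (d (e₁ p))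
        = B (courantBracket B d σ e₁ e₂ p) (e₃ p)
          + B (e₂ p) (courantBracket B d σ e₁ e₃ p) := by
  intro p
  -- In finite dimensions the form is continuous, so the product rule for bounded bilinear maps applies.
  let Bc : W1 →L[ℝ] W1 →L[ℝ] ℝ :=
    LinearMap.toContinuousLinearMap (LinearMap.toContinuousLinearMap.toLinearMap ∘ₗ B)
  have h₂ : HasFDerivAt e₂ (fderiv ℝ e₂ p) p :=
    (he₂.differentiable (by simp) p).hasFDerivAt
  have h₃ : HasFDerivAt e₃ (fderiv ℝ e₃ p) p :=
    (he₃.differentiable (by simp) p).hasFDerivAt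
  have hprod : fderiv ℝ (fun q => B (e₂ q) (e₃ q)) p (d (e₁ p))
      = B (e₂ p) (fderiv ℝ e₃ p (d (e₁ p))) + B (fderiv ℝ e₂ p (d (e₁ p))) (e₃ p) := by
    have h : HasFDerivAt (fun q => B (e₂ q) (e₃ q)) _ p := Bc.hasFDerivAt_of_bilinear h₂ h₃
    rw [h.fderiv]
    rfl
  -- By the adjunction `hσ`, each `σ` term cancels the `De₁` term of the other bracket.
  have hs : ∀ u w : W1, B (σ (LinearMap.toContinuousLinearMap
      ((B u) ∘ₗ (fderiv ℝ e₁ p : W0 →ₗ[ℝ] W1)))) w = B u (fderiv ℝ e₁ p (d w)) := by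
    intro u w
    rw [hσ]
    rfl
  rw [hprod]
  simp only [courantBracket, map_add, map_sub, LinearMap.add_apply, LinearMap.sub_apply]
  rw [hs, hB (e₂ p) (σ _), hs, hB (e₃ p)]
  ring
end

section
/- (Jacobi identity in Leibniz form for the constant Courant bracket.) For all smooth maps e₁, e₂, e₃ : W₀ → W₁ and every p ∈ W₀, one has ⟦⟦e₁,e₂⟧, e₃⟧(p) = ⟦e₁, ⟦e₂,e₃⟧⟧(p) − ⟦e₂, ⟦e₁,e₃⟧⟧(p). -/
/-- The functional `v ↦ ⟨x, A v⟩` on `W₀`, built from continuous linear maps so that it can be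
differentiated in `x` and `A`. -/
noncomputable def pairingFunctional
    {W0 W1 : Type*}
    [NormedAddCommGroup W0] [NormedSpace ℝ W0]
    [NormedAddCommGroup W1] [NormedSpace ℝ W1] [FiniteDimensional ℝ W1]
    (B : W1 →ₗ[ℝ] W1 →ₗ[ℝ] ℝ) (x : W1) (A : W0 →L[ℝ] W1) : W0 →L[ℝ] ℝ :=
  (B.toContinuousBilinearMap x).comp A

lemma pairingFunctional_apply
    {W0 W1 : Type*}
    [NormedAddCommGroup W0] [NormedSpace ℝ W0]
    [NormedAddCommGroup W1] [NormedSpace ℝ W1] [FiniteDimensional ℝ W1]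
    (B : W1 →ₗ[ℝ] W1 →ₗ[ℝ] ℝ) (x : W1) (A : W0 →L[ℝ] W1) (v : W0) :
    pairingFunctional B x A v = B x (A v) := rfl

lemma second_fderiv_symm
    {W0 W1 : Type*} [NormedAddCommGroup W0] [NormedSpace ℝ W0]
    [NormedAddCommGroup W1] [NormedSpace ℝ W1]
    {e : W0 → W1} (he : ContDiff ℝ (⊤ : ℕ∞) e) (p v w : W0) :
    fderiv ℝ (fderiv ℝ e) p v w = fderiv ℝ (fderiv ℝ e) p w v :=
  he.contDiffAt.isSymmSndFDerivAt
    (by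
      rw [minSmoothness_of_isRCLikeNormedField]
      exact WithTop.coe_le_coe.2 (le_top : (2 : ℕ∞) ≤ ⊤)) v w

section

variable {W0 W1 : Type*}
  [NormedAddCommGroup W0] [NormedSpace ℝ W0] [FiniteDimensional ℝ W0]
  [NormedAddCommGroup W1] [NormedSpace ℝ W1] [FiniteDimensional ℝ W1]
  (B : W1 →ₗ[ℝ] W1 →ₗ[ℝ] ℝ) (d : W1 →L[ℝ] W0) (σ : (W0 →L[ℝ] ℝ) →ₗ[ℝ] W1)

lemma courantBracket_eq (e₁ e₂ : W0 → W1) (p : W0) :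
    courantBracket B d σ e₁ e₂ p =
      fderiv ℝ e₂ p (d (e₁ p)) - fderiv ℝ e₁ p (d (e₂ p)) +
        σ (pairingFunctional B (e₂ p) (fderiv ℝ e₁ p)) := rfl

lemma fderiv_courantBracket {e₁ e₂ : W0 → W1}
    (he₁ : ContDiff ℝ (⊤ : ℕ∞) e₁) (he₂ : ContDiff ℝ (⊤ : ℕ∞) e₂) (p v : W0) :
    fderiv ℝ (courantBracket B d σ e₁ e₂) p v =
      fderiv ℝ e₂ p (d (fderiv ℝ e₁ p v)) + fderiv ℝ (fderiv ℝ e₂) p v (d (e₁ p))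
        - (fderiv ℝ e₁ p (d (fderiv ℝ e₂ p v)) + fderiv ℝ (fderiv ℝ e₁) p v (d (e₂ p)))
        + σ (pairingFunctional B (e₂ p) (fderiv ℝ (fderiv ℝ e₁) p v)
            + pairingFunctional B (fderiv ℝ e₂ p v) (fderiv ℝ e₁ p)) := by
  have h₁ : HasFDerivAt e₁ (fderiv ℝ e₁ p) p :=
    (he₁.differentiable (by simp)).differentiableAt.hasFDerivAt
  have h₂ : HasFDerivAt e₂ (fderiv ℝ e₂ p) p :=
    (he₂.differentiable (by simp)).differentiableAt.hasFDerivAt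
  have h₁₁ : HasFDerivAt (fderiv ℝ e₁) (fderiv ℝ (fderiv ℝ e₁) p) p :=
    ((he₁.fderiv_right (m := 1) (WithTop.coe_le_coe.2 (le_top : (1 + 1 : ℕ∞) ≤ ⊤))).differentiable
      (by simp)).differentiableAt.hasFDerivAt
  have h₂₂ : HasFDerivAt (fderiv ℝ e₂) (fderiv ℝ (fderiv ℝ e₂) p) p :=
    ((he₂.fderiv_right (m := 1) (WithTop.coe_le_coe.2 (le_top : (1 + 1 : ℕ∞) ≤ ⊤))).differentiable
      (by simp)).differentiableAt.hasFDerivAt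
  have hd₁ := d.hasFDerivAt.comp p h₁
  have hd₂ := d.hasFDerivAt.comp p h₂
  have hpair := ((B.toContinuousBilinearMap).hasFDerivAt.comp p h₂).clm_comp h₁₁
  have hσ := (LinearMap.toContinuousLinearMap σ).hasFDerivAt.comp p hpair
  have h := ((h₂₂.clm_apply hd₁).sub (h₁₁.clm_apply hd₂)).add hσ
  have hfd : fderiv ℝ (courantBracket B d σ e₁ e₂) p = _ := HasFDerivAt.fderiv h
  rw [hfd]
  rfl

end

/-- Jacobi identity in Leibniz form for the constant Courant bracket:
`⟦⟦e₁,e₂⟧, e₃⟧ = ⟦e₁, ⟦e₂,e₃⟧⟧ − ⟦e₂, ⟦e₁,e₃⟧⟧`. -/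
theorem stmt_12
    (W0 W1 : Type*)
    [NormedAddCommGroup W0] [NormedSpace ℝ W0] [FiniteDimensional ℝ W0]
    [NormedAddCommGroup W1] [NormedSpace ℝ W1] [FiniteDimensional ℝ W1]
    (B : W1 →ₗ[ℝ] W1 →ₗ[ℝ] ℝ)
    (hB : ∀ x y : W1, B x y = B y x)
    (d : W1 →L[ℝ] W0)
    (σ : (W0 →L[ℝ] ℝ) →ₗ[ℝ] W1)
    (hσ : ∀ (ξ : W0 →L[ℝ] ℝ) (w : W1), B (σ ξ) w = ξ (d w))
    (hdσ : ∀ ξ : W0 →L[ℝ] ℝ, d (σ ξ) = 0)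
    (e₁ e₂ e₃ : W0 → W1)
    (he₁ : ContDiff ℝ (⊤ : ℕ∞) e₁) (he₂ : ContDiff ℝ (⊤ : ℕ∞) e₂)
    (he₃ : ContDiff ℝ (⊤ : ℕ∞) e₃) :
    ∀ p : W0,
      courantBracket B d σ (courantBracket B d σ e₁ e₂) e₃ p
        = courantBracket B d σ e₁ (courantBracket B d σ e₂ e₃) p
          - courantBracket B d σ e₂ (courantBracket B d σ e₁ e₃) p := by
  intro p
  -- Equality of the functionals to which `σ` is applied on the two sides.
  have key :
      pairingFunctional B (e₃ p) (fderiv ℝ (courantBracket B d σ e₁ e₂) p)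
        - (pairingFunctional B (e₂ p) (fderiv ℝ (fderiv ℝ e₁) p (d (e₃ p)))
            + pairingFunctional B (fderiv ℝ e₂ p (d (e₃ p))) (fderiv ℝ e₁ p))
      = (pairingFunctional B (e₃ p) (fderiv ℝ (fderiv ℝ e₂) p (d (e₁ p)))
            + pairingFunctional B (fderiv ℝ e₃ p (d (e₁ p))) (fderiv ℝ e₂ p))
        + pairingFunctional B (courantBracket B d σ e₂ e₃ p) (fderiv ℝ e₁ p)
        - (pairingFunctional B (e₃ p) (fderiv ℝ (fderiv ℝ e₁) p (d (e₂ p)))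
            + pairingFunctional B (fderiv ℝ e₃ p (d (e₂ p))) (fderiv ℝ e₁ p))
        - pairingFunctional B (courantBracket B d σ e₁ e₃ p) (fderiv ℝ e₂ p) := by
    ext v
    have hσ' : ∀ ξ : W0 →L[ℝ] ℝ, B (e₃ p) (σ ξ) = ξ (d (e₃ p)) := fun ξ => by rw [hB, hσ]
    simp only [add_apply, sub_apply,
      pairingFunctional_apply, fderiv_courantBracket B d σ he₁ he₂, courantBracket_eq,
      map_add, map_sub, LinearMap.add_apply, LinearMap.sub_apply, hσ, hσ']
    rw [second_fderiv_symm he₁ p v, second_fderiv_symm he₁ p v,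
      second_fderiv_symm he₂ p v, hB (fderiv ℝ e₂ p v)]
    ring
  have hkey := congrArg σ key
  simp only [map_add, map_sub] at hkey
  rw [courantBracket_eq B d σ (courantBracket B d σ e₁ e₂) e₃,
    courantBracket_eq B d σ e₁ (courantBracket B d σ e₂ e₃),
    courantBracket_eq B d σ e₂ (courantBracket B d σ e₁ e₃)]
  have hd : ∀ f g : W0 → W1, d (courantBracket B d σ f g p) =
      d (fderiv ℝ g p (d (f p))) - d (fderiv ℝ f p (d (g p))) := fun f g => by
    rw [courantBracket_eq, map_add, map_sub, hdσ, add_zero]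
  rw [fderiv_courantBracket B d σ he₁ he₂, fderiv_courantBracket B d σ he₂ he₃,
    fderiv_courantBracket B d σ he₁ he₃]
  simp only [hd, map_add, map_sub]
  rw [second_fderiv_symm he₃ p (d (e₂ p)), second_fderiv_symm he₂ p (d (e₃ p)),
    second_fderiv_symm he₁ p (d (e₃ p)) (d (e₂ p))]
  linear_combination (norm := module) hkey
end

section
/- Let U₀ ⊆ W₀, U₁ ⊆ W₁, and U₂ ⊆ W₀* be subspaces with σ(U₂) ⊆ U₁ and ∂(U₁) ⊆ U₀, and set L₂ := U₂ × U₁ × U₁ × U₀ ⊆ V₂. Then the ω-orthogonal of L₂ satisfies {w ∈ V₂ : ω(w,u) = 0 for all u ∈ L₂} = Ann(U₀) × U₁^⊥ × U₁^⊥ × Ann(U₂). -/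
/-!
Since `σ(U₂) ⊆ U₁` and `∂(U₁) ⊆ U₀`, every term of `ω(w, u)` with `u ∈ L₂` pairs a component
of `w` with an element of `U₀`, `U₁` or `U₂`, so the product of annihilators is `ω`-orthogonal
to `L₂`. Conversely, evaluating `ω(w, ·)` on the four factors of `L₂`, in the order
`U₀`, `U₁`, `U₁`, `U₂`, isolates the annihilation condition on each component of `w`.
-/

/-- The constant symplectic form on `V₂ = W₀* × W₁ × W₁ × W₀` of a symmetric constant
symplectic 2-groupoid:
`ω((ξ,x,y,m),(ξ',x',y',m')) = ξ(∂x' + ∂y' − m') − ⟨x, y' + σξ'⟩ + ⟨y, x' − σξ'⟩ + ξ'(m)`. -/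
def symplecticForm2
    {W0 W1 : Type*}
    [AddCommGroup W0] [Module ℝ W0]
    [AddCommGroup W1] [Module ℝ W1]
    (B : W1 →ₗ[ℝ] W1 →ₗ[ℝ] ℝ)
    (d : W1 →ₗ[ℝ] W0)
    (σ : Module.Dual ℝ W0 →ₗ[ℝ] W1)
    (w u : Module.Dual ℝ W0 × W1 × W1 × W0) : ℝ :=
  w.1 (d u.2.1 + d u.2.2.1 - u.2.2.2) - B w.2.1 (u.2.2.1 + σ u.1)
    + B w.2.2.1 (u.2.1 - σ u.1) + u.1 w.2.2.2

/-- for subspaces `U₀ ⊆ W₀`, `U₁ ⊆ W₁`, `U₂ ⊆ W₀*` with `σ(U₂) ⊆ U₁` and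
`∂(U₁) ⊆ U₀`, the `ω`-orthogonal of `L₂ = U₂ × U₁ × U₁ × U₀` is
`Ann(U₀) × U₁^⊥ × U₁^⊥ × Ann(U₂)`. -/
theorem stmt_14
    (W0 W1 : Type*)
    [AddCommGroup W0] [Module ℝ W0] [FiniteDimensional ℝ W0]
    [AddCommGroup W1] [Module ℝ W1] [FiniteDimensional ℝ W1]
    (B : W1 →ₗ[ℝ] W1 →ₗ[ℝ] ℝ)
    (hB : ∀ x y : W1, B x y = B y x)
    (d : W1 →ₗ[ℝ] W0)
    (σ : Module.Dual ℝ W0 →ₗ[ℝ] W1)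
    (hσ : ∀ (ξ : Module.Dual ℝ W0) (w : W1), B (σ ξ) w = ξ (d w))
    (hdσ : ∀ ξ : Module.Dual ℝ W0, d (σ ξ) = 0)
    (U0 : Submodule ℝ W0) (U1 : Submodule ℝ W1)
    (U2 : Submodule ℝ (Module.Dual ℝ W0))
    (hσU : ∀ ξ ∈ U2, σ ξ ∈ U1)
    (hdU : ∀ x ∈ U1, d x ∈ U0) :
    {w : Module.Dual ℝ W0 × W1 × W1 × W0 |
        ∀ u ∈ (U2 : Set (Module.Dual ℝ W0)) ×ˢ (U1 : Set W1) ×ˢ (U1 : Set W1) ×ˢ (U0 : Set W0),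
          symplecticForm2 B d σ w u = 0}
      = {ξ : Module.Dual ℝ W0 | ∀ u ∈ U0, ξ u = 0}
          ×ˢ {x : W1 | ∀ u ∈ U1, B x u = 0}
          ×ˢ {x : W1 | ∀ u ∈ U1, B x u = 0}
          ×ˢ {m : W0 | ∀ ξ ∈ U2, ξ m = 0} := by
  ext ⟨ξ, x, y, m⟩
  simp only [Set.mem_ofPred_eq, Set.mem_prod, SetLike.mem_coe, symplecticForm2]
  constructor
  · intro h
    -- Test against vectors of `L₂` with a single nonzero component, starting with the last:
    -- `ξ ∈ Ann(U₀)` removes the `ξ(∂·)` terms, and `x, y ∈ U₁^⊥` the `⟨·, σξ'⟩` terms.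
    have hξ : ∀ u ∈ U0, ξ u = 0 := fun u hu => by
      simpa using h (0, 0, 0, u) ⟨U2.zero_mem, U1.zero_mem, U1.zero_mem, hu⟩
    have hx : ∀ u ∈ U1, B x u = 0 := fun u hu => by
      simpa [hξ _ (hdU u hu)] using
        h (0, 0, u, 0) ⟨U2.zero_mem, U1.zero_mem, hu, U0.zero_mem⟩
    have hy : ∀ u ∈ U1, B y u = 0 := fun u hu => by
      simpa [hξ _ (hdU u hu)] using
        h (0, u, 0, 0) ⟨U2.zero_mem, hu, U1.zero_mem, U0.zero_mem⟩
    refine ⟨hξ, hx, hy, fun η hη => ?_⟩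
    simpa [hx _ (hσU η hη), hy _ (hσU η hη)] using
      h (η, 0, 0, 0) ⟨hη, U1.zero_mem, U1.zero_mem, U0.zero_mem⟩
  · rintro ⟨hξ, hx, hy, hm⟩ ⟨η, a, b, c⟩ ⟨hη, ha, hb, hc⟩
    -- Each argument lies in the subspace annihilated by the functional applied to it.
    rw [hξ _ (U0.sub_mem (U0.add_mem (hdU a ha) (hdU b hb)) hc),
      hx _ (U1.add_mem hb (hσU η hη)), hy _ (U1.sub_mem ha (hσU η hη)), hm η hη]
    simp
end

section
/- Let U₀ ⊆ W₀, U₁ ⊆ W₁, and U₂ ⊆ W₀* be subspaces with σ(U₂) ⊆ U₁ and ∂(U₁) ⊆ U₀, set L₂ := U₂ × U₁ × U₁ × U₀ ⊆ V₂, and let L₂^ω := {w ∈ V₂ : ω(w,u) = 0 for all u ∈ L₂}. Then: (1) L₂ ⊆ L₂^ω if and only if ξ(m) = 0 for all ξ ∈ U₂ and m ∈ U₀, and U₁ is isotropic (⟨u,u'⟩ = 0 for all u, u' ∈ U₁); (2) L₂^ω ⊆ L₂ if and only if Ann(U₂) ⊆ U₀, Ann(U₀) ⊆ U₂, and U₁^⊥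 ⊆ U₁; (3) L₂^ω = L₂ if and only if U₂ = Ann(U₀) and U₁^⊥ = U₁. -/
/-- The `ω`-orthogonal of `U₂ × U₁ × U₁ × U₀` is again a product; the conditions on its factors
are read off by pairing with vectors supported in a single factor. -/
theorem orthogonal_eq_prod
    {W0 W1 : Type*} [AddCommGroup W0] [Module ℝ W0] [AddCommGroup W1] [Module ℝ W1]
    (B : W1 →ₗ[ℝ] W1 →ₗ[ℝ] ℝ) (d : W1 →ₗ[ℝ] W0) (σ : Module.Dual ℝ W0 →ₗ[ℝ] W1)
    (U0 : Submodule ℝ W0) (U1 : Submodule ℝ W1) (U2 : Submodule ℝ (Module.Dual ℝ W0))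
    (hσU : ∀ ξ ∈ U2, σ ξ ∈ U1) (hdU : ∀ x ∈ U1, d x ∈ U0) :
    {w : Module.Dual ℝ W0 × W1 × W1 × W0 |
        ∀ u ∈ (U2 : Set (Module.Dual ℝ W0)) ×ˢ (U1 : Set W1) ×ˢ (U1 : Set W1) ×ˢ (U0 : Set W0),
          symplecticForm2 B d σ w u = 0}
      = {ξ : Module.Dual ℝ W0 | ∀ u ∈ U0, ξ u = 0} ×ˢ {x : W1 | ∀ u ∈ U1, B x u = 0} ×ˢ
          {x : W1 | ∀ u ∈ U1, B x u = 0} ×ˢ {m : W0 | ∀ ξ ∈ U2, ξ m = 0} := by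
  ext ⟨ξ, x, y, m⟩
  simp only [Set.mem_ofPred_eq, Set.mem_prod, SetLike.mem_coe, symplecticForm2]
  constructor
  · intro h
    have hξ : ∀ u ∈ U0, ξ u = 0 := fun u hu => by
      simpa using h (0, 0, 0, u) ⟨U2.zero_mem, U1.zero_mem, U1.zero_mem, hu⟩
    have hx : ∀ u ∈ U1, B x u = 0 := fun u hu => by
      simpa [hξ _ (hdU u hu)] using h (0, 0, u, 0) ⟨U2.zero_mem, U1.zero_mem, hu, U0.zero_mem⟩
    have hy : ∀ u ∈ U1, B y u = 0 := fun u hu => by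
      simpa [hξ _ (hdU u hu)] using h (0, u, 0, 0) ⟨U2.zero_mem, hu, U1.zero_mem, U0.zero_mem⟩
    refine ⟨hξ, hx, hy, fun η hη => ?_⟩
    simpa [hx _ (hσU η hη), hy _ (hσU η hη)] using
      h (η, 0, 0, 0) ⟨hη, U1.zero_mem, U1.zero_mem, U0.zero_mem⟩
  · rintro ⟨hξ, hx, hy, hm⟩ ⟨η, x', y', m'⟩ ⟨hη, hx', hy', hm'⟩
    rw [hξ _ (U0.sub_mem (U0.add_mem (hdU _ hx') (hdU _ hy')) hm'),
      hx _ (U1.add_mem hy' (hσU _ hη)), hy _ (U1.sub_mem hx' (hσU _ hη)), hm _ hη]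
    simp

/-- with `L₂ = U₂ × U₁ × U₁ × U₀` and `L₂^ω` its `ω`-orthogonal:
(1) `L₂ ⊆ L₂^ω` iff `U₂` and `U₀` pair to zero and `U₁` is isotropic;
(2) `L₂^ω ⊆ L₂` iff `Ann(U₂) ⊆ U₀`, `Ann(U₀) ⊆ U₂` and `U₁^⊥ ⊆ U₁`;
(3) `L₂^ω = L₂` iff `U₂ = Ann(U₀)` and `U₁^⊥ = U₁`. -/
theorem stmt_15
    (W0 W1 : Type*)
    [AddCommGroup W0] [Module ℝ W0] [FiniteDimensional ℝ W0]
    [AddCommGroup W1] [Module ℝ W1] [FiniteDimensional ℝ W1]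
    (B : W1 →ₗ[ℝ] W1 →ₗ[ℝ] ℝ)
    (hB : ∀ x y : W1, B x y = B y x)
    (d : W1 →ₗ[ℝ] W0)
    (σ : Module.Dual ℝ W0 →ₗ[ℝ] W1)
    (hσ : ∀ (ξ : Module.Dual ℝ W0) (w : W1), B (σ ξ) w = ξ (d w))
    (hdσ : ∀ ξ : Module.Dual ℝ W0, d (σ ξ) = 0)
    (U0 : Submodule ℝ W0) (U1 : Submodule ℝ W1)
    (U2 : Submodule ℝ (Module.Dual ℝ W0))
    (hσU : ∀ ξ ∈ U2, σ ξ ∈ U1)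
    (hdU : ∀ x ∈ U1, d x ∈ U0) :
    -- (1) L₂ is isotropic iff U₂, U₀ pair to zero and U₁ is isotropic
    (((U2 : Set (Module.Dual ℝ W0)) ×ˢ (U1 : Set W1) ×ˢ (U1 : Set W1) ×ˢ (U0 : Set W0)
        ⊆ {w : Module.Dual ℝ W0 × W1 × W1 × W0 |
            ∀ u ∈ (U2 : Set (Module.Dual ℝ W0)) ×ˢ (U1 : Set W1) ×ˢ (U1 : Set W1) ×ˢ (U0 : Set W0),
              symplecticForm2 B d σ w u = 0})
      ↔ ((∀ ξ ∈ U2, ∀ m ∈ U0, ξ m = 0) ∧ (∀ u ∈ U1, ∀ u' ∈ U1, B u u' = 0)))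
    -- (2) L₂ is coisotropic iff Ann(U₂) ⊆ U₀, Ann(U₀) ⊆ U₂ and U₁^⊥ ⊆ U₁
    ∧ (({w : Module.Dual ℝ W0 × W1 × W1 × W0 |
            ∀ u ∈ (U2 : Set (Module.Dual ℝ W0)) ×ˢ (U1 : Set W1) ×ˢ (U1 : Set W1) ×ˢ (U0 : Set W0),
              symplecticForm2 B d σ w u = 0}
          ⊆ (U2 : Set (Module.Dual ℝ W0)) ×ˢ (U1 : Set W1) ×ˢ (U1 : Set W1) ×ˢ (U0 : Set W0))
      ↔ ({m : W0 | ∀ ξ ∈ U2, ξ m = 0} ⊆ (U0 : Set W0)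
          ∧ {ξ : Module.Dual ℝ W0 | ∀ u ∈ U0, ξ u = 0} ⊆ (U2 : Set (Module.Dual ℝ W0))
          ∧ {x : W1 | ∀ u ∈ U1, B x u = 0} ⊆ (U1 : Set W1)))
    -- (3) L₂ is Lagrangian iff U₂ = Ann(U₀) and U₁^⊥ = U₁
    ∧ (({w : Module.Dual ℝ W0 × W1 × W1 × W0 |
            ∀ u ∈ (U2 : Set (Module.Dual ℝ W0)) ×ˢ (U1 : Set W1) ×ˢ (U1 : Set W1) ×ˢ (U0 : Set W0),
              symplecticForm2 B d σ w u = 0}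
          = (U2 : Set (Module.Dual ℝ W0)) ×ˢ (U1 : Set W1) ×ˢ (U1 : Set W1) ×ˢ (U0 : Set W0))
      ↔ ((U2 : Set (Module.Dual ℝ W0)) = {ξ : Module.Dual ℝ W0 | ∀ u ∈ U0, ξ u = 0}
          ∧ {x : W1 | ∀ u ∈ U1, B x u = 0} = (U1 : Set W1))) := by
  rw [orthogonal_eq_prod B d σ U0 U1 U2 hσU hdU]
  have hz0 : (0 : W0) ∈ {m : W0 | ∀ ξ ∈ U2, ξ m = 0} := fun ξ _ => map_zero ξ
  have hz1 : (0 : W1) ∈ {x : W1 | ∀ u ∈ U1, B x u = 0} := fun u _ => by simp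
  have hz2 : (0 : Module.Dual ℝ W0) ∈ {ξ : Module.Dual ℝ W0 | ∀ u ∈ U0, ξ u = 0} :=
    fun u _ => rfl
  have hsub : (U2 : Set (Module.Dual ℝ W0)) ×ˢ (U1 : Set W1) ×ˢ (U1 : Set W1) ×ˢ (U0 : Set W0)
        ⊆ {ξ : Module.Dual ℝ W0 | ∀ u ∈ U0, ξ u = 0} ×ˢ {x : W1 | ∀ u ∈ U1, B x u = 0} ×ˢ
          {x : W1 | ∀ u ∈ U1, B x u = 0} ×ˢ {m : W0 | ∀ ξ ∈ U2, ξ m = 0}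
      ↔ (∀ ξ ∈ U2, ∀ m ∈ U0, ξ m = 0) ∧ (∀ u ∈ U1, ∀ u' ∈ U1, B u u' = 0) := by
    constructor
    · intro h
      exact ⟨fun ξ hξ => (h (a := (ξ, 0, 0, 0))
          ⟨hξ, U1.zero_mem, U1.zero_mem, U0.zero_mem⟩).1,
        fun u hu => (h (a := (0, u, 0, 0))
          ⟨U2.zero_mem, hu, U1.zero_mem, U0.zero_mem⟩).2.1⟩
    · rintro ⟨h, h'⟩ ⟨ξ, x, y, m⟩ ⟨hξ, hx, hy, hm⟩
      exact ⟨h ξ hξ, h' x hx, h' y hy, fun η hη => h η hη m hm⟩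
  have hsup : {ξ : Module.Dual ℝ W0 | ∀ u ∈ U0, ξ u = 0} ×ˢ {x : W1 | ∀ u ∈ U1, B x u = 0} ×ˢ
          {x : W1 | ∀ u ∈ U1, B x u = 0} ×ˢ {m : W0 | ∀ ξ ∈ U2, ξ m = 0}
        ⊆ (U2 : Set (Module.Dual ℝ W0)) ×ˢ (U1 : Set W1) ×ˢ (U1 : Set W1) ×ˢ (U0 : Set W0)
      ↔ {m : W0 | ∀ ξ ∈ U2, ξ m = 0} ⊆ (U0 : Set W0)
          ∧ {ξ : Module.Dual ℝ W0 | ∀ u ∈ U0, ξ u = 0} ⊆ (U2 : Set (Module.Dual ℝ W0))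
          ∧ {x : W1 | ∀ u ∈ U1, B x u = 0} ⊆ (U1 : Set W1) := by
    constructor
    · intro h
      exact ⟨fun m hm => (h (a := (0, 0, 0, m)) ⟨hz2, hz1, hz1, hm⟩).2.2.2,
        fun ξ hξ => (h (a := (ξ, 0, 0, 0)) ⟨hξ, hz1, hz1, hz0⟩).1,
        fun x hx => (h (a := (0, x, 0, 0)) ⟨hz2, hx, hz1, hz0⟩).2.1⟩
    · rintro ⟨h0, h2, h1⟩ ⟨ξ, x, y, m⟩ ⟨hξ, hx, hy, hm⟩
      exact ⟨h2 hξ, h1 hx, h1 hy, h0 hm⟩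
  refine ⟨hsub, hsup, ?_⟩
  rw [Set.Subset.antisymm_iff, hsub, hsup]
  constructor
  · rintro ⟨⟨_, h2, h1⟩, hp, hi⟩
    exact ⟨Set.Subset.antisymm hp h2, Set.Subset.antisymm h1 hi⟩
  · rintro ⟨h2, h1⟩
    refine ⟨⟨fun m hm => ?_, h2.ge, h1.le⟩, h2.le, h1.ge⟩
    -- A vector killed by every functional vanishing on `U₀` lies in `U₀`.
    refine (Subspace.forall_mem_dualAnnihilator_apply_eq_zero_iff U0 m).1 fun η hη => ?_
    exact hm η (h2.ge ((Submodule.mem_dualAnnihilator η).1 hη))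
end

section
/- (Construction of linear Lagrangian sub-2-groupoids from Lagrangian pairs.) Let U₁ ⊆ W₁ be a subspace with U₁^⊥ = U₁ and let U₀ ⊆ W₀ be a subspace with ∂(U₁) ⊆ U₀. Then σ(Ann(U₀)) ⊆ U₁, and the subspace L₂ := Ann(U₀) × U₁ × U₁ × U₀ ⊆ V₂ is Lagrangian: {w ∈ V₂ : ω(w,u) = 0 for all u ∈ L₂} = L₂. -/
/-- construction of linear Lagrangian sub-2-groupoids from Lagrangian
pairs: if `U₁^⊥ = U₁` and `∂(U₁) ⊆ U₀`, then `σ(Ann(U₀)) ⊆ U₁` and the subspace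
`L₂ = Ann(U₀) × U₁ × U₁ × U₀ ⊆ V₂` is Lagrangian for `ω`. -/
theorem stmt_16
    (W0 W1 : Type*)
    [AddCommGroup W0] [Module ℝ W0] [FiniteDimensional ℝ W0]
    [AddCommGroup W1] [Module ℝ W1] [FiniteDimensional ℝ W1]
    (B : W1 →ₗ[ℝ] W1 →ₗ[ℝ] ℝ)
    (hB : ∀ x y : W1, B x y = B y x)
    (d : W1 →ₗ[ℝ] W0)
    (σ : Module.Dual ℝ W0 →ₗ[ℝ] W1)
    (hσ : ∀ (ξ : Module.Dual ℝ W0) (w : W1), B (σ ξ) w = ξ (d w))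
    (hdσ : ∀ ξ : Module.Dual ℝ W0, d (σ ξ) = 0)
    (U0 : Submodule ℝ W0) (U1 : Submodule ℝ W1)
    (hU1 : {x : W1 | ∀ u ∈ U1, B x u = 0} = (U1 : Set W1))
    (hdU : ∀ x ∈ U1, d x ∈ U0) :
    (∀ ξ : Module.Dual ℝ W0, (∀ u ∈ U0, ξ u = 0) → σ ξ ∈ U1)
    ∧ ({w : Module.Dual ℝ W0 × W1 × W1 × W0 |
          ∀ u ∈ {ξ : Module.Dual ℝ W0 | ∀ m ∈ U0, ξ m = 0}
              ×ˢ (U1 : Set W1) ×ˢ (U1 : Set W1) ×ˢ (U0 : Set W0),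
            symplecticForm2 B d σ w u = 0}
        = {ξ : Module.Dual ℝ W0 | ∀ m ∈ U0, ξ m = 0}
            ×ˢ (U1 : Set W1) ×ˢ (U1 : Set W1) ×ˢ (U0 : Set W0)) := by
  have mem_iff : ∀ x, x ∈ U1 ↔ ∀ u ∈ U1, B x u = 0 := fun x => by
    rw [← SetLike.mem_coe, ← hU1, Set.mem_setOf_eq]
  have hσU : ∀ ξ : Module.Dual ℝ W0, (∀ u ∈ U0, ξ u = 0) → σ ξ ∈ U1 := fun ξ hξ =>
    (mem_iff _).2 fun u hu => by rw [hσ]; exact hξ _ (hdU u hu)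
  refine ⟨hσU, ?_⟩
  ext ⟨ξ, x, y, m⟩
  simp only [Set.mem_setOf_eq, Set.mem_prod, SetLike.mem_coe, symplecticForm2]
  constructor
  · intro h
    have hξ : ∀ m ∈ U0, ξ m = 0 := fun m' hm' => by
      simpa using h (0, 0, 0, m') ⟨by simp, U1.zero_mem, U1.zero_mem, hm'⟩
    have hx : x ∈ U1 := (mem_iff x).2 fun u hu => by
      simpa [hξ _ (hdU u hu)] using
        h (0, 0, u, 0) ⟨by simp, U1.zero_mem, hu, U0.zero_mem⟩
    have hy : y ∈ U1 := (mem_iff y).2 fun u hu => by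
      simpa [hξ _ (hdU u hu)] using
        h (0, u, 0, 0) ⟨by simp, hu, U1.zero_mem, U0.zero_mem⟩
    refine ⟨hξ, hx, hy, ?_⟩
    -- A subspace is the common kernel of the functionals annihilating it.
    rw [← Subspace.dualAnnihilator_dualCoannihilator_eq (W := U0),
      Submodule.mem_dualCoannihilator]
    intro η hη
    rw [Submodule.mem_dualAnnihilator] at hη
    have hση := hσU η hη
    simpa [(mem_iff x).1 hx _ hση, (mem_iff y).1 hy _ hση] using
      h (η, 0, 0, 0) ⟨hη, U1.zero_mem, U1.zero_mem, U0.zero_mem⟩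
  · rintro ⟨hξ, hx, hy, hm⟩ ⟨η, x', y', m'⟩ ⟨hη, hx', hy', hm'⟩
    have hση := hσU η hη
    simp only at hη hx' hy' hm'
    rw [hξ _ (U0.sub_mem (U0.add_mem (hdU _ hx') (hdU _ hy')) hm'),
      (mem_iff x).1 hx _ (U1.add_mem hy' hση),
      (mem_iff y).1 hy _ (U1.sub_mem hx' hση), hη _ hm]
    simp
end

section
/- (Closure of constant Dirac structures under the constant Courant bracket.) Let U₁ ⊆ W₁ be a subspace with U₁^⊥ = U₁, where U₁^⊥ := {x ∈ W₁ : ⟨x,u⟩ = 0 for all u ∈ U₁}. If e₁, e₂ : W₀ → W₁ are smooth maps with e₁(p) ∈ U₁ and e₂(p) ∈ U₁ for all p ∈ W₀, then ⟦e₁,e₂⟧(p) ∈ U₁ for all p ∈ W₀. -/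
/-- A linear functional vanishing on `U` annihilates `e`, hence also its derivative; such
functionals separate `U` from any vector outside it. -/
theorem fderiv_mem_of_forall_mem
    {V W : Type*} [NormedAddCommGroup V] [NormedSpace ℝ V]
    [NormedAddCommGroup W] [NormedSpace ℝ W] [FiniteDimensional ℝ W]
    (U : Submodule ℝ W) {e : V → W} (he : Differentiable ℝ e) (heU : ∀ p, e p ∈ U)
    (p v : V) : fderiv ℝ e p v ∈ U := by
  by_contra hx
  obtain ⟨f, hfx, hfU⟩ := Submodule.exists_le_ker_of_notMem hx
  have hconst : (LinearMap.toContinuousLinearMap f) ∘ e = fun _ => (0 : ℝ) :=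
    funext fun y => hfU (heU y)
  have hd := (LinearMap.toContinuousLinearMap f).hasFDerivAt.comp p (he p).hasFDerivAt
  rw [hconst] at hd
  exact hfx (DFunLike.congr_fun (hd.unique (hasFDerivAt_const (0 : ℝ) p)) v)

/-- closure of constant Dirac structures under the constant Courant
bracket: if `U₁^⊥ = U₁` and `e₁, e₂` are smooth maps taking values in `U₁`, then
`⟦e₁,e₂⟧` takes values in `U₁`. -/
theorem stmt_17
    (W0 W1 : Type*)
    [NormedAddCommGroup W0] [NormedSpace ℝ W0] [FiniteDimensional ℝ W0]
    [NormedAddCommGroup W1] [NormedSpace ℝ W1] [FiniteDimensional ℝ W1]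
    (B : W1 →ₗ[ℝ] W1 →ₗ[ℝ] ℝ)
    (hB : ∀ x y : W1, B x y = B y x)
    (d : W1 →L[ℝ] W0)
    (σ : (W0 →L[ℝ] ℝ) →ₗ[ℝ] W1)
    (hσ : ∀ (ξ : W0 →L[ℝ] ℝ) (w : W1), B (σ ξ) w = ξ (d w))
    (hdσ : ∀ ξ : W0 →L[ℝ] ℝ, d (σ ξ) = 0)
    (U1 : Submodule ℝ W1)
    (hU1 : ∀ x : W1, (∀ u ∈ U1, B x u = 0) ↔ x ∈ U1)
    (e₁ e₂ : W0 → W1)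
    (he₁ : ContDiff ℝ (⊤ : ℕ∞) e₁) (he₂ : ContDiff ℝ (⊤ : ℕ∞) e₂)
    (he₁U : ∀ p : W0, e₁ p ∈ U1) (he₂U : ∀ p : W0, e₂ p ∈ U1) :
    ∀ p : W0, courantBracket B d σ e₁ e₂ p ∈ U1 := by
  intro p
  have h₁ := fderiv_mem_of_forall_mem U1 (he₁.differentiable (by simp)) he₁U p
  have h₂ := fderiv_mem_of_forall_mem U1 (he₂.differentiable (by simp)) he₂U p
  refine U1.add_mem (U1.sub_mem (h₂ _) (h₁ _)) ((hU1 _).1 fun u _ => ?_)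
  rw [hσ]
  exact (hU1 _).2 (he₂U p) _ (h₁ (d u))
end
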